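/- arXiv:0809.2194 — 2 statements merged into one kernel-verified Lean document; each statement's English description precedes it below -/
import Mathlib

section
/- Let K be a field, Δ a simplicial complex on X = {x_1,...,x_n}, F a face of Δ with F ≠ X, and Δ' = Δ ∪ co_{x_0}F. Then pd K[Δ'] = max(pd K[Δ] + 1, n − |F|), where pd denotes projective dimension over the respective polynomial rings. -/
open MvPolynomial

section Core

variable {V : Type*} [DecidableEq V]

/-- `Δ` is a simplicial complex on the vertex set `V`: every singleton is a face
and faces are closed under taking subsets. -/
def IsSimplicialComplex (Δ : Set (Finset V)) : Prop :=
  (∀ v : V, ({v} : Finset V) ∈ Δ) ∧ ∀ F ∈ Δ, ∀ G ⊆ F, G ∈ Δ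

/-- The Stanley-Reisner ideal of `Δ` over `K`: generated by the squarefree monomials
whose support is not a face of `Δ`. -/
noncomputable def srIdeal (K : Type*) [Field K] (Δ : Set (Finset V)) :
    Ideal (MvPolynomial V K) :=
  Ideal.span ((fun S : Finset V => ∏ v ∈ S, (X v : MvPolynomial V K)) '' {S | S ∉ Δ})

/-- The simplicial complex `Δ ∪ co_{x₀} F` on the vertex set `V ∪ {x₀}`,
realized as `Option V` with `none` playing the role of the new vertex `x₀`. -/
def coneUnion (Δ : Set (Finset V)) (F : Finset V) : Set (Finset (Option V)) :=
  ((fun G : Finset V => G.map Function.Embedding.some) '' Δ) ∪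
    {G : Finset (Option V) | G ⊆ insert none (F.map Function.Embedding.some)}

/-- A facet is a maximal face. -/
def IsFacet (Δ : Set (Finset V)) (F : Finset V) : Prop :=
  F ∈ Δ ∧ ∀ G ∈ Δ, F ⊆ G → F = G

/-- The prime ideal `P_F` generated by the variables not in `F`. -/
noncomputable def facePrime (K : Type*) [Field K] (F : Finset V) :
    Ideal (MvPolynomial V K) :=
  Ideal.span ((fun v : V => (X v : MvPolynomial V K)) '' {v : V | v ∉ F})

/-- The dimension of a simplicial complex. -/
noncomputable def scDim (Δ : Set (Finset V)) : ℕ := sSup (Finset.card '' Δ) - 1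

/-- A subfacet of a (pure) complex: a face whose cardinality equals the dimension. -/
noncomputable def IsSubfacet (Δ : Set (Finset V)) (F : Finset V) : Prop :=
  F ∈ Δ ∧ F.card = scDim Δ

end Core

/-- The arithmetical rank of an ideal: the least number of elements generating it
up to radical. -/
noncomputable def ara {R : Type*} [CommRing R] (I : Ideal R) : ℕ :=
  sInf {s : ℕ | ∃ a : Fin s → R, (Ideal.span (Set.range a)).radical = I.radical}

/-- The height of an ideal: the infimum of the heights of the primes containing it. -/
noncomputable def idealHeight {R : Type*} [CommRing R] (I : Ideal R) : ℕ∞ :=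
  ⨅ p : {p : PrimeSpectrum R // I ≤ p.asIdeal}, Order.height p.1

open CategoryTheory

/-- The projective dimension of a module: the least `n` for which `M` admits a projective
resolution vanishing in homological degrees `> n`. -/
noncomputable def projDim {R : Type*} [CommRing R] (M : ModuleCat R) : ℕ :=
  sInf {m : ℕ | ∃ P : ProjectiveResolution M, ∀ i : ℕ, m < i → Limits.IsZero (P.complex.X i)}

/-!
Write `R' = K[X']`, `I = I_Δ R'`, `P = (x_v : v ∉ F)`, and `c = n - |F|`. The Stanley-Reisner ideal
of `Δ'` is `I + x₀ P`, and since `x₀` is regular on `R'/I` there is an exact sequence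
`0 → R'/P → R'/(I + x₀ P) → R'/(I, x₀) → 0`, the first map being multiplication by `x₀`. The outer
modules have projective dimensions `c` and `pd K[Δ] + 1`, which gives the upper bound.

For the lower bound apply `Ext(-, k)`, where `k` is the residue field of the homogeneous maximal
ideal `𝔪`, and put `p = pd K[Δ]`. If `p < c`, then `Ext^c(R'/P, k) ≠ 0` is hit from
`Ext^c(R'/(I + x₀ P), k)`, because `Ext^(c+1)(R'/(I, x₀), k) = 0`. If `c ≤ p`, comparing with
`0 → R'/I → R'/I → R'/(I, x₀) → 0` shows that `pd R'/(I + x₀ P) ≤ p` would force the restriction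
`Ext^p(R'/P, k) → Ext^p(R'/I, k)` to be surjective. It is zero: for `c < p` because its source
vanishes, and for `c = p` because it factors through `R'/(J + x_y 𝔪)`, where `y ∉ F` and `J` is
generated by the other variables of `P`, and restriction to this quotient kills the top Koszul
class. Its target is nonzero since a minimal graded resolution of `R'/I` has length `p`.
-/

/-! ### Projective dimension and finite resolutions -/

section FiniteResolutions

universe v u

variable {C : Type u} [Category.{v} C] [Abelian C]

theorem hasProjectiveDimensionLE_of_resolution {M : C} (P : ProjectiveResolution M) {m : ℕ}
    (hP : ∀ i : ℕ, m < i → Limits.IsZero (P.complex.X i)) : HasProjectiveDimensionLE M m := by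
  let := HasExt.standard C
  refine HasProjectiveDimensionLT.mk fun i hi Y e ↦ ?_
  obtain ⟨f, hf, rfl⟩ := P.extMk_surjective e (i + 1) rfl
  obtain rfl : f = 0 := (hP i hi).eq_of_src _ _
  exact P.extMk_zero _ rfl

theorem exact_epi_comp {S : ShortComplex C} (hS : S.Exact) {X : C} (p : X ⟶ S.X₁) [Epi p] :
    (ShortComplex.mk (p ≫ S.f) S.g (by simp)).Exact := by
  let φ : ShortComplex.mk (p ≫ S.f) S.g (by simp) ⟶ S := { τ₁ := p, τ₂ := 𝟙 _, τ₃ := 𝟙 _ }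
  have : Epi φ.τ₁ := ‹_›
  have : IsIso φ.τ₂ := inferInstanceAs (IsIso (𝟙 _))
  have : Mono φ.τ₃ := inferInstanceAs (Mono (𝟙 _))
  exact (ShortComplex.exact_iff_of_epi_of_isIso_of_mono φ).2 hS

theorem exact_comp_mono {S : ShortComplex C} (hS : S.Exact) {Y : C} (j : S.X₃ ⟶ Y) [Mono j] :
    (ShortComplex.mk S.f (S.g ≫ j) (by simp)).Exact := by
  let φ : S ⟶ ShortComplex.mk S.f (S.g ≫ j) (by simp) := { τ₁ := 𝟙 _, τ₂ := 𝟙 _, τ₃ := j }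
  have : Epi φ.τ₁ := inferInstanceAs (Epi (𝟙 _))
  have : IsIso φ.τ₂ := inferInstanceAs (IsIso (𝟙 _))
  have : Mono φ.τ₃ := ‹_›
  exact (ShortComplex.exact_iff_of_epi_of_isIso_of_mono φ).1 hS

theorem quasiIso_toSingle₀ {M : C} (P : ChainComplex C ℕ) (ε : P.X 0 ⟶ M) (hε : Epi ε)
    (w : P.d 1 0 ≫ ε = 0) (exact_zero : (ShortComplex.mk _ _ w).Exact)
    (exact_succ : ∀ n, (P.sc' (n + 2) (n + 1) n).Exact) :
    QuasiIso ((P.toSingle₀Equiv M).symm ⟨ε, w⟩) := by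
  refine ⟨fun n ↦ ?_⟩
  cases n with
  | zero =>
    have π_zero : ((P.toSingle₀Equiv M).symm ⟨ε, w⟩).f 0 = ε :=
      ChainComplex.toSingle₀Equiv_symm_apply_f_zero _ _
    rw [ChainComplex.quasiIsoAt₀_iff, ShortComplex.quasiIso_iff_of_zeros']
    · refine (ShortComplex.exact_and_epi_g_iff_of_iso ?_).2 ⟨exact_zero, hε⟩
      exact ShortComplex.isoMk (Iso.refl _) (Iso.refl _) (Iso.refl _)
        ((Category.id_comp _).trans (Category.comp_id _).symm)
        ((Category.id_comp _).trans (π_zero.symm.trans (Category.comp_id _).symm))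
    exacts [P.shape _ _ (by simp), rfl, rfl]
  | succ n =>
    rw [quasiIsoAt_iff_exactAt' _ _ (ChainComplex.exactAt_succ_single_obj _ _),
      HomologicalComplex.exactAt_iff' _ (n + 2) (n + 1) n (by simp) (by simp)]
    exact exact_succ n

theorem exists_resolution_splice {S : ShortComplex C} (hS : S.ShortExact) [Projective S.X₂]
    (Q : ProjectiveResolution S.X₁) :
    ∃ P : ProjectiveResolution S.X₃, ∀ i, P.complex.X (i + 1) = Q.complex.X i := by
  have := hS.mono_f
  obtain ⟨p, hp, _, p_exact⟩ : ∃ (p : Q.complex.X 0 ⟶ S.X₁) (hp : Q.complex.d 1 0 ≫ p = 0),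
      Epi p ∧ (ShortComplex.mk _ _ hp).Exact :=
    ⟨Q.π.f 0, Q.complex_d_comp_π_f_zero, inferInstanceAs (Epi (Q.π.f 0)), Q.exact₀⟩
  have w : Q.complex.d 1 0 ≫ p ≫ S.f = 0 := by
    rw [← Category.assoc, hp, Limits.zero_comp]
  let P := Q.complex.augment (p ≫ S.f) w
  have hP : P.d 1 0 ≫ S.g = 0 := by
    change (p ≫ S.f) ≫ S.g = 0
    simp
  have hquasi : QuasiIso ((P.toSingle₀Equiv S.X₃).symm ⟨S.g, hP⟩) := by
    refine quasiIso_toSingle₀ P S.g hS.epi_g hP (exact_epi_comp hS.exact p) ?_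
    rintro (_ | n)
    exacts [exact_comp_mono p_exact S.f, Q.exact_succ n]
  refine ⟨⟨P, ?_, _, hquasi⟩, fun i ↦ rfl⟩
  rintro (_ | n)
  exacts [‹Projective S.X₂›, Q.projective n]

theorem exists_resolution_of_hasProjectiveDimensionLE [EnoughProjectives C] {m : ℕ} {M : C}
    (hM : HasProjectiveDimensionLE M m) :
    ∃ P : ProjectiveResolution M, ∀ i : ℕ, m < i → Limits.IsZero (P.complex.X i) := by
  induction m generalizing M with
  | zero =>
    have := (projective_iff_hasProjectiveDimensionLE_zero M).2 hM
    exact ⟨ProjectiveResolution.self M,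
      fun i hi ↦ HomologicalComplex.isZero_single_obj_X _ _ _ _ (by lia)⟩
  | succ n ih =>
    obtain ⟨⟨P, f⟩⟩ := EnoughProjectives.presentation M
    let S := ShortComplex.mk (Limits.kernel.ι f) f (Limits.kernel.condition f)
    have hS : S.ShortExact := { exact := ShortComplex.exact_kernel f }
    have : Projective S.X₂ := ‹_›
    obtain ⟨Q, hQ⟩ := ih ((hS.hasProjectiveDimensionLT_X₃_iff n ‹_›).1 hM)
    obtain ⟨P', hP'⟩ := exists_resolution_splice hS Q
    refine ⟨P', fun i hi ↦ ?_⟩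
    obtain ⟨i, rfl⟩ := Nat.exists_eq_add_of_lt (Nat.zero_lt_of_lt hi)
    rw [zero_add, hP']
    exact hQ i (by lia)

end FiniteResolutions

section ProjDim

universe u

variable {R : Type u} [CommRing R] {M : ModuleCat.{u} R}

theorem projDim_le_iff (hM : ∃ m, HasProjectiveDimensionLE M m) (m : ℕ) :
    projDim M ≤ m ↔ HasProjectiveDimensionLE M m := by
  have projDim_eq : projDim M = sInf {m | HasProjectiveDimensionLE M m} :=
    congrArg sInf (Set.ext fun _ ↦ ⟨fun ⟨P, hP⟩ ↦ hasProjectiveDimensionLE_of_resolution P hP,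
      exists_resolution_of_hasProjectiveDimensionLE⟩)
  rw [projDim_eq]
  refine ⟨fun h ↦ ?_, fun h ↦ Nat.sInf_le h⟩
  have hsInf : HasProjectiveDimensionLE M (sInf {m | HasProjectiveDimensionLE M m}) :=
    Nat.sInf_mem (s := {m | HasProjectiveDimensionLE M m}) hM
  exact hasProjectiveDimensionLT_of_ge M _ _ (Nat.succ_le_succ h)

theorem projDim_eq_of_forall_iff {d : ℕ} (hM : ∀ m, HasProjectiveDimensionLE M m ↔ d ≤ m) :
    projDim M = d :=
  eq_of_forall_ge_iff fun m ↦ (projDim_le_iff ⟨d, (hM d).2 le_rfl⟩ m).trans (hM m)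

end ProjDim

/-! ### Change of rings -/

section ChangeOfRings

universe v u v' u'

theorem hasProjectiveDimensionLE_map {C : Type u} [Category.{v} C] [Abelian C]
    [EnoughProjectives C] {D : Type u'} [Category.{v'} D] [Abelian D] (G : C ⥤ D) [G.Additive]
    [Limits.PreservesFiniteLimits G] [Limits.PreservesFiniteColimits G]
    [G.PreservesProjectiveObjects] {n : ℕ} {M : C} (hM : HasProjectiveDimensionLE M n) :
    HasProjectiveDimensionLE (G.obj M) n := by
  induction n generalizing M with
  | zero =>
    rw [← projective_iff_hasProjectiveDimensionLE_zero] at hM ⊢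
    exact G.projective_obj M
  | succ n ih =>
    obtain ⟨⟨P, f⟩⟩ := EnoughProjectives.presentation M
    let S := ShortComplex.mk (Limits.kernel.ι f) f (Limits.kernel.condition f)
    have hS : S.ShortExact := { exact := ShortComplex.exact_kernel f }
    have : Projective (S.map G).X₂ := G.projective_obj _
    have hker := (hS.hasProjectiveDimensionLT_X₃_iff n ‹_›).1 hM
    exact ((hS.map_of_exact G).hasProjectiveDimensionLT_X₃_iff n ‹_›).2 (ih hker)

theorem projective_trans (R S M : Type*) [CommRing R] [CommRing S] [Algebra R S] [AddCommGroup M]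
    [Module R M] [Module S M] [IsScalarTower R S M] [Module.Projective R S]
    [Module.Projective S M] : Module.Projective R M := by
  obtain ⟨s, hs⟩ := Module.projective_def'.1 ‹Module.Projective S M›
  have : Module.Projective R (M →₀ S) := by
    classical exact .of_equiv (finsuppLequivDFinsupp R).symm
  exact Module.Projective.of_split (M := M →₀ S) (s.restrictScalars R)
    ((Finsupp.linearCombination S id).restrictScalars R)
    (LinearMap.ext fun x ↦ LinearMap.congr_fun hs x)

theorem hasProjectiveDimensionLE_quotient_map {R S : Type u} [CommRing R] [CommRing S]
    {f : R →+* S} (hf : f.Flat) (I : Ideal R) {n : ℕ}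
    (hI : HasProjectiveDimensionLE (ModuleCat.of R (R ⧸ I)) n) :
    HasProjectiveDimensionLE (ModuleCat.of S (S ⧸ I.map f)) n := by
  let adj := ModuleCat.extendRestrictScalarsAdj.{u} f
  have := ModuleCat.preservesFiniteLimits_extendScalars_of_flat hf
  have := Functor.preservesProjectiveObjects_of_adjunction_of_preservesEpimorphisms adj
  have := adj.leftAdjoint_preservesColimits
  have : (ModuleCat.extendScalars f).Additive := adj.left_adjoint_additive
  have := hasProjectiveDimensionLE_map (ModuleCat.extendScalars f) hI
  let := f.toAlgebra
  let e : (ModuleCat.extendScalars f).obj (ModuleCat.of R (R ⧸ I)) ≅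
      ModuleCat.of S (S ⧸ I.map f) :=
    (Algebra.TensorProduct.quotIdealMapEquivTensorQuot S I).symm.toLinearEquiv.toModuleIso
  exact hasProjectiveDimensionLT_of_iso e _

variable {R S : Type u} [CommRing R] [CommRing S] [Algebra R S]

theorem preservesProjectiveObjects_restrictScalars [Module.Projective R S] :
    (ModuleCat.restrictScalars.{u} (algebraMap R S)).PreservesProjectiveObjects where
  projective_obj {M} hM := by
    rw [← IsProjective.iff_projective] at hM ⊢
    let : Module R M := Module.compHom M (algebraMap R S)
    have : IsScalarTower R S M := IsScalarTower.of_algebraMap_smul fun _ _ ↦ rfl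
    exact projective_trans R S M

theorem hasProjectiveDimensionLE_of_isScalarTower [Module.Projective R S] {M : Type u}
    [AddCommGroup M] [Module R M] [Module S M] [IsScalarTower R S M] {n : ℕ}
    (hM : HasProjectiveDimensionLE (ModuleCat.of S M) n) :
    HasProjectiveDimensionLE (ModuleCat.of R M) n := by
  have := preservesProjectiveObjects_restrictScalars (R := R) (S := S)
  have := hasProjectiveDimensionLE_map (ModuleCat.restrictScalars.{u} (algebraMap R S)) hM
  let e : (ModuleCat.restrictScalars.{u} (algebraMap R S)).obj (ModuleCat.of S M) ≃ₗ[R] M :=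
    { AddEquiv.refl M with map_smul' := fun r m ↦ algebraMap_smul S r (show M from m) }
  exact hasProjectiveDimensionLT_of_iso e.toModuleIso _

theorem hasProjectiveDimensionLE_of_quotient_map [Module.Projective R S] (g : S →ₐ[R] R)
    (I : Ideal R) {n : ℕ}
    (hI : HasProjectiveDimensionLE (ModuleCat.of S (S ⧸ I.map (algebraMap R S))) n) :
    HasProjectiveDimensionLE (ModuleCat.of R (R ⧸ I)) n := by
  have := hasProjectiveDimensionLE_of_isScalarTower (R := R) hI
  have map_le : I.map (algebraMap R S) ≤ I.comap g :=
    Ideal.map_le_iff_le_comap.2 fun r hr ↦ by simpa using hr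
  let i := Ideal.quotientMapₐ (I.map (algebraMap R S)) (Algebra.ofId R S) Ideal.le_comap_map
  let r := Ideal.quotientMapₐ I g map_le
  have hri : r.toLinearMap ∘ₗ i.toLinearMap = LinearMap.id := by
    ext
    simp [r, i]
  exact (Retract.mk (ModuleCat.ofHom i.toLinearMap) (ModuleCat.ofHom r.toLinearMap)
    (ModuleCat.hom_ext hri)).hasProjectiveDimensionLT _

end ChangeOfRings

section AddVariable

variable {V K : Type*} [CommRing K]

theorem hasProjectiveDimensionLE_map_rename_some_iff (I : Ideal (MvPolynomial V K)) (n : ℕ) :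
    HasProjectiveDimensionLE (ModuleCat.of (MvPolynomial (Option V) K)
      (MvPolynomial (Option V) K ⧸ I.map (rename some : MvPolynomial V K →ₐ[K] _))) n ↔
    HasProjectiveDimensionLE (ModuleCat.of (MvPolynomial V K) (MvPolynomial V K ⧸ I)) n := by
  let := (rename some : MvPolynomial V K →ₐ[K] MvPolynomial (Option V) K).toRingHom.toAlgebra
  have hC (p : MvPolynomial V K) : optionEquivLeft K V (rename some p) = Polynomial.C p := by
    induction p using MvPolynomial.induction_on with
    | C a => simp
    | add p q hp hq => simp only [map_add, hp, hq]
    | mul_X p i hp => simp only [map_mul, hp, rename_X, optionEquivLeft_X_some]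
  let e : Polynomial (MvPolynomial V K) ≃ₐ[MvPolynomial V K] MvPolynomial (Option V) K :=
    (AlgEquiv.ofRingEquiv (f := (optionEquivLeft K V).toRingEquiv) hC).symm
  have : Module.Free (MvPolynomial V K) (MvPolynomial (Option V) K) :=
    .of_equiv e.toLinearEquiv
  exact ⟨hasProjectiveDimensionLE_of_quotient_map ((Polynomial.aeval 0).comp e.symm) I,
    hasProjectiveDimensionLE_quotient_map (RingHom.flat_algebraMap_iff.2 inferInstance) I⟩

end AddVariable

/-! ### Colon sequences of cyclic modules -/

section CyclicModules

open Abelian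

universe u

variable {R : Type u} [CommRing R]

/-- The cyclic module `R / I` as an object of the category of `R`-modules. -/
abbrev cyclicModule (I : Ideal R) : ModuleCat.{u} R :=
  ModuleCat.of R (R ⧸ I)

/-- The canonical surjection `R / I ⟶ R / J` for `I ≤ J`. -/
def cyclicMap {I J : Ideal R} (h : I ≤ J) : cyclicModule I ⟶ cyclicModule J :=
  ModuleCat.ofHom (Submodule.mapQ I J LinearMap.id h)

/-- The map `R / I ⟶ R / J` induced by multiplication by `x`, for `x I ⊆ J`. -/
def cyclicMul {I J : Ideal R} (x : R) (h : ∀ a ∈ I, x * a ∈ J) : cyclicModule I ⟶ cyclicModule J :=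
  ModuleCat.ofHom (Submodule.mapQ I J (LinearMap.mulLeft R x) h)

theorem cyclicModule_hom_ext {I : Ideal R} {M : ModuleCat.{u} R} {f g : cyclicModule I ⟶ M}
    (h : ∀ a : R, f.hom (Submodule.Quotient.mk a) = g.hom (Submodule.Quotient.mk a)) : f = g :=
  ModuleCat.hom_ext <| LinearMap.ext fun x ↦ by
    obtain ⟨a, rfl⟩ := Submodule.Quotient.mk_surjective _ x
    exact h a

theorem cyclicMap_comp {I J L : Ideal R} (hIJ : I ≤ J) (hJL : J ≤ L) :
    cyclicMap hIJ ≫ cyclicMap hJL = cyclicMap (hIJ.trans hJL) :=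
  cyclicModule_hom_ext fun _ ↦ rfl

theorem cyclicMap_self {I : Ideal R} (h : I ≤ I) : cyclicMap h = 𝟙 _ :=
  cyclicModule_hom_ext fun _ ↦ rfl

/-- The restriction map `Extⁱ(R / J, N) → Extⁱ(R / I, N)` along `R / I ⟶ R / J`. -/
noncomputable def extRestrict {I J : Ideal R} (h : I ≤ J) (N : ModuleCat.{u} R) (i : ℕ) :
    Ext (cyclicModule J) N i →+ Ext (cyclicModule I) N i :=
  (Ext.mk₀ (cyclicMap h)).precomp N (zero_add i)

theorem extRestrict_trans_apply {I J L : Ideal R} (hIJ : I ≤ J) (hJL : J ≤ L)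
    {N : ModuleCat.{u} R} {i : ℕ} (e : Ext (cyclicModule L) N i) :
    extRestrict (hIJ.trans hJL) N i e = extRestrict hIJ N i (extRestrict hJL N i e) := by
  rw [extRestrict, ← cyclicMap_comp hIJ hJL]
  exact (Ext.mk₀_comp_mk₀_assoc _ _ _).symm

theorem mk₀_cyclicMul_comp_eq_zero {I J : Ideal R} (x : R) (hIJ : I ≤ J)
    (hx : ∀ a ∈ I, x * a ∈ J) {N : ModuleCat.{u} R} (hN : ∀ n : N, x • n = 0) {i : ℕ}
    (e : Ext (cyclicModule J) N i) : (Ext.mk₀ (cyclicMul x hx)).comp e (zero_add i) = 0 := by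
  have hmul : cyclicMul x hx = x • cyclicMap hIJ := cyclicModule_hom_ext fun _ ↦ rfl
  have hid : x • 𝟙 N = 0 := by
    ext n
    exact hN n
  have he : x • e = 0 := by
    rw [← Ext.comp_mk₀_id e, ← Ext.comp_smul, ← Ext.mk₀_smul, hid, Ext.mk₀_zero, Ext.comp_zero]
  rw [hmul, Ext.mk₀_smul, Ext.smul_comp, ← Ext.comp_smul, he, Ext.comp_zero]

/-- `J = Q : x` and `T = Q + (x)`, that is,
`0 ⟶ R / J ⟶ R / Q ⟶ R / T ⟶ 0` is exact, the first map being multiplication by `x`. -/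
structure IsColonTriple (J Q T : Ideal R) (x : R) : Prop where
  mul_mem_iff : ∀ a, x * a ∈ Q ↔ a ∈ J
  eq_sup : T = Q ⊔ Ideal.span {x}

namespace IsColonTriple

variable {J Q T : Ideal R} {x : R}

theorem of_isSMulRegular {I J : Ideal R} (hIJ : I ≤ J) (hx : IsSMulRegular (R ⧸ I) x) :
    IsColonTriple J (I ⊔ Ideal.span {x} * J) (I ⊔ Ideal.span {x}) x where
  mul_mem_iff a := by
    refine ⟨fun ha ↦ ?_, fun ha ↦ Ideal.mem_sup_right
      (Ideal.mul_mem_mul (Ideal.mem_span_singleton_self x) ha)⟩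
    obtain ⟨q, hq, z, hz, hqz⟩ := Submodule.mem_sup.1 ha
    obtain ⟨b, hb, rfl⟩ := Ideal.mem_span_singleton_mul.1 hz
    have hab : x • (a - b) ∈ I := by
      rwa [smul_eq_mul, mul_sub, sub_eq_iff_eq_add.2 hqz.symm]
    have hsub := (isSMulRegular_quotient_iff_mem_of_smul_mem _ _).1 hx _ hab
    simpa using add_mem (hIJ hsub) hb
  eq_sup := by
    rw [sup_assoc, sup_eq_right.2 (Ideal.mul_le_left : Ideal.span {x} * J ≤ _)]

theorem self_of_isSMulRegular {I : Ideal R} (hx : IsSMulRegular (R ⧸ I) x) :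
    IsColonTriple I I (I ⊔ Ideal.span {x}) x where
  mul_mem_iff a :=
    ⟨(isSMulRegular_quotient_iff_mem_of_smul_mem _ _).1 hx a, Ideal.mul_mem_left _ _⟩
  eq_sup := rfl

theorem le (h : IsColonTriple J Q T x) : Q ≤ T := h.eq_sup ▸ le_sup_left

theorem mem (h : IsColonTriple J Q T x) : x ∈ T :=
  h.eq_sup ▸ Ideal.mem_sup_right (Ideal.mem_span_singleton_self x)

/-- The short complex `R / J ⟶ R / Q ⟶ R / T` of a colon triple. -/
def shortComplex (h : IsColonTriple J Q T x) : ShortComplex (ModuleCat.{u} R) where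
  X₁ := cyclicModule J
  X₂ := cyclicModule Q
  X₃ := cyclicModule T
  f := cyclicMul x fun a ↦ (h.mul_mem_iff a).2
  g := cyclicMap h.le
  zero := cyclicModule_hom_ext fun _ ↦
    (Submodule.Quotient.mk_eq_zero _).2 (Ideal.mul_mem_right _ _ h.mem)

theorem function_exact (h : IsColonTriple J Q T x) :
    Function.Exact h.shortComplex.f.hom h.shortComplex.g.hom := by
  intro b
  obtain ⟨b, rfl⟩ := Submodule.Quotient.mk_surjective _ b
  change Submodule.Quotient.mk b = (0 : R ⧸ T) ↔ _
  rw [Submodule.Quotient.mk_eq_zero]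
  constructor
  · intro hb
    rw [h.eq_sup, Submodule.mem_sup] at hb
    obtain ⟨q, hq, z, hz, rfl⟩ := hb
    obtain ⟨a, rfl⟩ := Ideal.mem_span_singleton'.1 hz
    refine ⟨Submodule.Quotient.mk a, (Submodule.Quotient.eq _).2 ?_⟩
    simpa [mul_comm] using hq
  · rintro ⟨a, ha⟩
    obtain ⟨a, rfl⟩ := Submodule.Quotient.mk_surjective _ a
    have hab : x * a - b ∈ Q := (Submodule.Quotient.eq _).1 ha
    simpa using sub_mem (Ideal.mul_mem_right a T h.mem) (h.le hab)

theorem shortExact (h : IsColonTriple J Q T x) : h.shortComplex.ShortExact := by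
  refine .mk' ((ShortComplex.ShortExact.moduleCat_exact_iff_function_exact _).2 h.function_exact)
    ((ModuleCat.mono_iff_injective _).2 ((injective_iff_map_eq_zero _).2 fun a ha ↦ ?_))
    ((ModuleCat.epi_iff_surjective _).2 fun a ↦ ?_)
  · obtain ⟨a, rfl⟩ := Submodule.Quotient.mk_surjective _ a
    exact (Submodule.Quotient.mk_eq_zero _).2
      ((h.mul_mem_iff a).1 ((Submodule.Quotient.mk_eq_zero _).1 ha))
  · obtain ⟨a, rfl⟩ := Submodule.Quotient.mk_surjective _ a
    exact ⟨Submodule.Quotient.mk a, rfl⟩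

/-- The extension class in `Ext¹(R / T, R / J)` of the short exact sequence of a colon triple. -/
noncomputable def extClass (h : IsColonTriple J Q T x) :
    Ext (cyclicModule T) (cyclicModule J) 1 :=
  h.shortExact.extClass

theorem extClass_naturality {J' Q' T' : Ideal R} (h : IsColonTriple J Q T x)
    (h' : IsColonTriple J' Q' T' x) (hJ : J ≤ J') (hQ : Q ≤ Q') (hT : T ≤ T') :
    h.extClass.comp (Ext.mk₀ (cyclicMap hJ)) (add_zero 1) =
      (Ext.mk₀ (cyclicMap hT)).comp h'.extClass (zero_add 1) :=
  ShortComplex.ShortExact.extClass_naturality h.shortExact h'.shortExact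
    { τ₁ := cyclicMap hJ
      τ₂ := cyclicMap hQ
      τ₃ := cyclicMap hT
      comm₁₂ := cyclicModule_hom_ext fun _ ↦ rfl
      comm₂₃ := cyclicModule_hom_ext fun _ ↦ rfl }

theorem exists_cyclicMul_comp_eq (h : IsColonTriple J Q T x) {N : ModuleCat.{u} R} {i : ℕ}
    {e : Ext (cyclicModule J) N i} (he : h.extClass.comp e (add_comm 1 i) = 0) :
    ∃ e' : Ext (cyclicModule Q) N i,
      (Ext.mk₀ (cyclicMul x fun a ↦ (h.mul_mem_iff a).2)).comp e' (zero_add i) = e :=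
  Ext.contravariant_sequence_exact₁ h.shortExact N e (add_comm 1 i) he

theorem exists_extClass_comp_eq (h : IsColonTriple J Q T x) {N : ModuleCat.{u} R} {i : ℕ}
    {e : Ext (cyclicModule T) N (i + 1)}
    (he : extRestrict h.le N (i + 1) e = 0) :
    ∃ e' : Ext (cyclicModule J) N i, h.extClass.comp e' (add_comm 1 i) = e :=
  Ext.contravariant_sequence_exact₃ h.shortExact N e he (add_comm 1 i)

theorem injective_extClass_precomp (h : IsColonTriple J Q T x) (hJQ : J ≤ Q)
    {N : ModuleCat.{u} R} (hN : ∀ n : N, x • n = 0) (i : ℕ) :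
    Function.Injective (h.extClass.precomp N (add_comm 1 i)) := by
  refine (injective_iff_map_eq_zero _).2 fun e he ↦ ?_
  obtain ⟨e', rfl⟩ := h.exists_cyclicMul_comp_eq he
  exact mk₀_cyclicMul_comp_eq_zero x hJQ _ hN e'

theorem hasProjectiveDimensionLT_middle (h : IsColonTriple J Q T x) {n : ℕ}
    (hJ : HasProjectiveDimensionLT (cyclicModule J) n)
    (hT : HasProjectiveDimensionLT (cyclicModule T) n) :
    HasProjectiveDimensionLT (cyclicModule Q) n :=
  h.shortExact.hasProjectiveDimensionLT_X₂ n hJ hT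

theorem hasProjectiveDimensionLT_right (h : IsColonTriple J Q T x) {n : ℕ}
    (hJ : HasProjectiveDimensionLT (cyclicModule J) n)
    (hQ : HasProjectiveDimensionLT (cyclicModule Q) (n + 1)) :
    HasProjectiveDimensionLT (cyclicModule T) (n + 1) :=
  h.shortExact.hasProjectiveDimensionLT_X₃ n hJ hQ

end IsColonTriple

end CyclicModules

section RegularElement

open Abelian

universe u

variable {R : Type u} [CommRing R] {I P : Ideal R} {x : R} {N : ModuleCat.{u} R} {p c : ℕ}

theorem hasProjectiveDimensionLE_sup_span_singleton (hx : IsSMulRegular (R ⧸ I) x)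
    (hI : HasProjectiveDimensionLE (cyclicModule I) p) :
    HasProjectiveDimensionLE (cyclicModule (I ⊔ Ideal.span {x})) (p + 1) :=
  (IsColonTriple.self_of_isSMulRegular hx).hasProjectiveDimensionLT_right hI
    (hasProjectiveDimensionLT_of_ge _ (p + 1) _ (Nat.le_succ _))

theorem hasProjectiveDimensionLE_sup_mul (hIP : I ≤ P) (hx : IsSMulRegular (R ⧸ I) x)
    (hI : HasProjectiveDimensionLE (cyclicModule I) p)
    (hP : HasProjectiveDimensionLE (cyclicModule P) c) :
    HasProjectiveDimensionLE (cyclicModule (I ⊔ Ideal.span {x} * P)) (max (p + 1) c) := by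
  have hIx := hasProjectiveDimensionLE_sup_span_singleton hx hI
  exact (IsColonTriple.of_isSMulRegular hIP hx).hasProjectiveDimensionLT_middle
    (hasProjectiveDimensionLT_of_ge _ (c + 1) _ (by lia))
    (hasProjectiveDimensionLT_of_ge _ (p + 2) _ (by lia))

theorem not_hasProjectiveDimensionLT_sup_mul_of_lt (hIP : I ≤ P) (hx : IsSMulRegular (R ⧸ I) x)
    (hI : HasProjectiveDimensionLE (cyclicModule I) p) (hpc : p < c)
    {eP : Ext (cyclicModule P) N c} (heP : eP ≠ 0) :
    ¬ HasProjectiveDimensionLT (cyclicModule (I ⊔ Ideal.span {x} * P)) c := by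
  intro hQ
  have hIx := hasProjectiveDimensionLE_sup_span_singleton hx hI
  let hC := IsColonTriple.of_isSMulRegular hIP hx
  have hδ : hC.extClass.comp eP (add_comm 1 c) = 0 :=
    Ext.eq_zero_of_hasProjectiveDimensionLT _ (p + 2) (by lia)
  obtain ⟨eQ, rfl⟩ := hC.exists_cyclicMul_comp_eq hδ
  rw [Ext.eq_zero_of_hasProjectiveDimensionLT eQ c le_rfl, Ext.comp_zero] at heP
  exact heP rfl

theorem extClass_comp_extRestrict (hIP : I ≤ P) (hx : IsSMulRegular (R ⧸ I) x) {i : ℕ}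
    (e : Ext (cyclicModule P) N i) :
    (IsColonTriple.self_of_isSMulRegular hx).extClass.comp (extRestrict hIP N i e)
        (add_comm 1 i) =
      (IsColonTriple.of_isSMulRegular hIP hx).extClass.comp e (add_comm 1 i) := by
  have hnat := (IsColonTriple.self_of_isSMulRegular hx).extClass_naturality
    (IsColonTriple.of_isSMulRegular hIP hx) hIP le_sup_left le_rfl
  rw [cyclicMap_self, Ext.mk₀_id_comp] at hnat
  rw [← hnat]
  exact (Ext.comp_assoc_of_second_deg_zero _ _ _ _).symm

/-- The connecting map of `0 → R/I → R/I → R/(I, x) → 0` is injective as `x` kills `N`. If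
`pd R/(I + xP) ≤ p`, that of `0 → R/P → R/(I + xP) → R/(I, x) → 0` is surjective in degree `p`. -/
theorem surjective_extRestrict_of_hasProjectiveDimensionLE (hIP : I ≤ P)
    (hx : IsSMulRegular (R ⧸ I) x) (hN : ∀ n : N, x • n = 0)
    (hQ : HasProjectiveDimensionLE (cyclicModule (I ⊔ Ideal.span {x} * P)) p) :
    Function.Surjective (extRestrict hIP N p) := by
  intro eI
  let hB := IsColonTriple.self_of_isSMulRegular hx
  obtain ⟨eP, heP⟩ := (IsColonTriple.of_isSMulRegular hIP hx).exists_extClass_comp_eq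
    (e := hB.extClass.comp eI (add_comm 1 p))
    (Ext.eq_zero_of_hasProjectiveDimensionLT _ (p + 1) le_rfl)
  refine ⟨eP, hB.injective_extClass_precomp le_rfl hN p ?_⟩
  exact (extClass_comp_extRestrict hIP hx eP).trans heP

theorem exists_extClass_comp_eq_of_surjective (hIP : I ≤ P) (hx : IsSMulRegular (R ⧸ I) x)
    (hI : HasProjectiveDimensionLE (cyclicModule I) p)
    (hres : Function.Surjective (extRestrict hIP N p))
    (e : Ext (cyclicModule (I ⊔ Ideal.span {x})) N (p + 1)) :
    ∃ ε : Ext (cyclicModule P) N p,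
      (IsColonTriple.of_isSMulRegular hIP hx).extClass.comp ε (add_comm 1 p) = e := by
  obtain ⟨e', rfl⟩ := (IsColonTriple.self_of_isSMulRegular hx).exists_extClass_comp_eq (e := e)
    (Ext.eq_zero_of_hasProjectiveDimensionLT _ (p + 1) le_rfl)
  obtain ⟨ε, rfl⟩ := hres e'
  exact ⟨ε, (extClass_comp_extRestrict hIP hx ε).symm⟩

theorem surjective_extRestrict_sup_span_singleton {I' T T' : Ideal R} (hII' : I ≤ I')
    (hT : T = I ⊔ Ideal.span {x}) (hT' : T' = I' ⊔ Ideal.span {x})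
    (hx : IsSMulRegular (R ⧸ I) x) (hx' : IsSMulRegular (R ⧸ I') x)
    (hI : HasProjectiveDimensionLE (cyclicModule I) p) (hIT' : I ≤ T')
    (hres : Function.Surjective (extRestrict hIT' N p)) (hTT' : T ≤ T') :
    Function.Surjective (extRestrict hTT' N (p + 1)) := by
  subst hT hT'
  intro e
  obtain ⟨ε, rfl⟩ := exists_extClass_comp_eq_of_surjective hIT' hx hI hres e
  let hC' := IsColonTriple.of_isSMulRegular (le_sup_left : I' ≤ I' ⊔ Ideal.span {x}) hx'
  have hnat := (IsColonTriple.of_isSMulRegular hIT' hx).extClass_naturality hC'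
    le_rfl (sup_le_sup_right hII' _) hTT'
  rw [cyclicMap_self, Ext.comp_mk₀_id] at hnat
  refine ⟨hC'.extClass.comp ε (add_comm 1 p), ?_⟩
  rw [hnat]
  exact (Ext.comp_assoc _ _ _ _ _ (by lia)).symm

theorem extRestrict_eq_zero_of_surjective (hIP : I ≤ P) (hx : IsSMulRegular (R ⧸ I) x)
    (hI : HasProjectiveDimensionLE (cyclicModule I) p)
    (hres : Function.Surjective (extRestrict hIP N p))
    (hle : I ⊔ Ideal.span {x} * P ≤ I ⊔ Ideal.span {x}) : extRestrict hle N (p + 1) = 0 := by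
  ext e
  obtain ⟨ε, rfl⟩ := exists_extClass_comp_eq_of_surjective hIP hx hI hres e
  exact (IsColonTriple.of_isSMulRegular hIP hx).shortExact.comp_extClass_assoc ε _

theorem hasProjectiveDimensionLE_sup_mul_iff (hIP : I ≤ P) (hx : IsSMulRegular (R ⧸ I) x)
    (hN : ∀ n : N, x • n = 0) (hI : HasProjectiveDimensionLE (cyclicModule I) p)
    (hP : HasProjectiveDimensionLE (cyclicModule P) c) {eI : Ext (cyclicModule I) N p}
    (heI : eI ≠ 0) {eP : Ext (cyclicModule P) N c} (heP : eP ≠ 0)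
    (hres : extRestrict hIP N c = 0) (m : ℕ) :
    HasProjectiveDimensionLE (cyclicModule (I ⊔ Ideal.span {x} * P)) m ↔ max (p + 1) c ≤ m := by
  refine ⟨fun hQ ↦ ?_, fun hm ↦ ?_⟩
  · by_contra! hm
    rcases lt_or_ge p c with hpc | hcp
    · refine not_hasProjectiveDimensionLT_sup_mul_of_lt hIP hx hI hpc heP ?_
      exact hasProjectiveDimensionLT_of_ge _ (m + 1) _ (by lia)
    · have : HasProjectiveDimensionLE (cyclicModule (I ⊔ Ideal.span {x} * P)) p :=
        hasProjectiveDimensionLT_of_ge _ (m + 1) _ (by lia)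
      obtain ⟨e, rfl⟩ := surjective_extRestrict_of_hasProjectiveDimensionLE hIP hx hN this eI
      rcases hcp.eq_or_lt with rfl | hcp
      · exact heI (DFunLike.congr_fun hres e)
      · rw [Ext.eq_zero_of_hasProjectiveDimensionLT e (c + 1) hcp, map_zero] at heI
        exact heI rfl
  · have := hasProjectiveDimensionLE_sup_mul hIP hx hI hP
    exact hasProjectiveDimensionLT_of_ge _ (max (p + 1) c + 1) _ (by lia)

end RegularElement

/-! ### Monomial ideals -/

section MonomialIdeals

variable {σ : Type*} {K : Type*} [CommRing K]

/-- The ideal of `K[σ]` generated by the monomials with exponents in `s`. -/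
noncomputable def monomialIdeal (K : Type*) [CommRing K] {σ : Type*} (s : Set (σ →₀ ℕ)) :
    Ideal (MvPolynomial σ K) :=
  Ideal.span ((fun a ↦ monomial a (1 : K)) '' s)

theorem mem_monomialIdeal {s : Set (σ →₀ ℕ)} {p : MvPolynomial σ K} :
    p ∈ monomialIdeal K s ↔ ∀ m ∈ p.support, ∃ b ∈ s, b ≤ m :=
  mem_ideal_span_monomial_image

theorem monomialIdeal_insert (a : σ →₀ ℕ) (s : Set (σ →₀ ℕ)) :
    monomialIdeal K (insert a s) = monomialIdeal K s ⊔ Ideal.span {monomial a 1} := by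
  rw [monomialIdeal, Set.image_insert_eq, Ideal.span_insert, sup_comm, monomialIdeal]

theorem map_rename_monomialIdeal {τ : Type*} (f : σ → τ) (s : Set (σ →₀ ℕ)) :
    (monomialIdeal K s).map (rename f : MvPolynomial σ K →ₐ[K] MvPolynomial τ K) =
      monomialIdeal K (Finsupp.mapDomain f '' s) := by
  simp only [monomialIdeal, Ideal.map_span, Set.image_image, rename_monomial]

theorem monomial_mul_mem_monomialIdeal_iff {s : Set (σ →₀ ℕ)} {a : σ →₀ ℕ}
    {p : MvPolynomial σ K} :
    monomial a 1 * p ∈ monomialIdeal K s ↔ p ∈ monomialIdeal K ((fun b ↦ b - a) '' s) := by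
  simp only [mem_monomialIdeal, Set.exists_mem_image, tsub_le_iff_left]
  refine ⟨fun h m hm ↦ h (a + m) ?_, fun h m hm ↦ ?_⟩
  · rwa [mem_support_iff, coeff_monomial_mul, one_mul, ← mem_support_iff]
  · rw [mem_support_iff, coeff_monomial_mul'] at hm
    split_ifs at hm with ham
    · rw [one_mul, ← mem_support_iff] at hm
      simpa only [add_tsub_cancel_of_le ham] using h _ hm
    · exact absurd rfl hm

theorem isColonTriple_monomialIdeal (a : σ →₀ ℕ) (s : Set (σ →₀ ℕ)) :
    IsColonTriple (monomialIdeal K ((fun b ↦ b - a) '' s)) (monomialIdeal K s)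
      (monomialIdeal K (insert a s)) (monomial a 1) where
  mul_mem_iff _ := monomial_mul_mem_monomialIdeal_iff
  eq_sup := monomialIdeal_insert a s

theorem isSMulRegular_X_monomialIdeal {s : Set (σ →₀ ℕ)} {y : σ} (hs : ∀ a ∈ s, a y = 0) :
    IsSMulRegular (MvPolynomial σ K ⧸ monomialIdeal K s) (X y : MvPolynomial σ K) := by
  have hsub : Set.EqOn (fun b ↦ b - Finsupp.single y 1) id s := fun b hb ↦ by
    ext i
    by_cases hi : i = y
    · simp [hi, hs b hb]
    · simp [hi]
  refine (isSMulRegular_quotient_iff_mem_of_smul_mem _ _).2 fun p hp ↦ ?_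
  rwa [smul_eq_mul, X, monomial_mul_mem_monomialIdeal_iff, hsub.image_eq, Set.image_id] at hp

theorem hasProjectiveDimensionLE_cyclicModule_bot {R : Type*} [CommRing R] :
    HasProjectiveDimensionLE (cyclicModule (⊥ : Ideal R)) 0 := by
  have : Projective (cyclicModule (⊥ : Ideal R)) := by
    rw [← IsProjective.iff_projective]
    exact Module.Projective.of_equiv (Submodule.quotEquivOfEqBot _ rfl).symm
  exact projective_iff_hasProjectiveDimensionLT_one.1 this

theorem exists_hasProjectiveDimensionLE_monomialIdeal (s : Finset (σ →₀ ℕ)) :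
    ∃ m, HasProjectiveDimensionLE (cyclicModule (monomialIdeal K (s : Set (σ →₀ ℕ)))) m := by
  classical
  induction hn : s.card using Nat.strong_induction_on generalizing s with | _ n ih
  obtain rfl | ⟨a, ha⟩ := s.eq_empty_or_nonempty
  · rw [monomialIdeal, Finset.coe_empty, Set.image_empty, Ideal.span_empty]
    exact ⟨0, hasProjectiveDimensionLE_cyclicModule_bot⟩
  · have hlt : (s.erase a).card < n := hn ▸ Finset.card_erase_lt_of_mem ha
    obtain ⟨m₁, h₁⟩ := ih _ hlt (s.erase a) rfl
    obtain ⟨m₂, h₂⟩ := ih _ (Finset.card_image_le.trans_lt hlt) ((s.erase a).image (· - a)) rfl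
    rw [Finset.coe_image] at h₂
    rw [← Finset.insert_erase ha, Finset.coe_insert]
    refine ⟨max m₁ m₂ + 1, (isColonTriple_monomialIdeal a _).hasProjectiveDimensionLT_right ?_ ?_⟩
    · exact hasProjectiveDimensionLT_of_ge _ (m₂ + 1) _ (by lia)
    · exact hasProjectiveDimensionLT_of_ge _ (m₁ + 1) _ (by lia)

end MonomialIdeals

/-! ### Ideals of variables -/

section VariableIdeals

open Abelian

variable {σ : Type*} {K : Type*} [CommRing K]

/-- The ideal of `K[σ]` generated by the variables in `s`. For `s = univ` this is the
homogeneous maximal ideal, whose residue module is the target of all `Ext` groups below. -/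
noncomputable def varIdeal (K : Type*) [CommRing K] {σ : Type*} (s : Set σ) :
    Ideal (MvPolynomial σ K) :=
  Ideal.span (X '' s)

theorem X_mem_varIdeal {s : Set σ} {i : σ} (hi : i ∈ s) :
    (X i : MvPolynomial σ K) ∈ varIdeal K s :=
  Ideal.subset_span ⟨i, hi, rfl⟩

theorem varIdeal_mono {s t : Set σ} (h : s ⊆ t) : varIdeal K s ≤ varIdeal K t :=
  Ideal.span_mono (Set.image_mono h)

theorem varIdeal_insert (y : σ) (s : Set σ) :
    varIdeal K (insert y s) = varIdeal K s ⊔ Ideal.span {X y} := by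
  rw [varIdeal, Set.image_insert_eq, Ideal.span_insert, sup_comm, varIdeal]

theorem varIdeal_eq_monomialIdeal (s : Set σ) :
    varIdeal K s = monomialIdeal K ((fun i ↦ Finsupp.single i 1) '' s) := by
  rw [varIdeal, monomialIdeal, Set.image_image]
  rfl

theorem mem_varIdeal_univ_iff {p : MvPolynomial σ K} :
    p ∈ varIdeal K (Set.univ : Set σ) ↔ coeff 0 p = 0 := by
  rw [varIdeal, mem_ideal_span_X_image, ← notMem_support_iff]
  refine ⟨fun h h0 ↦ ?_, fun h m hm ↦ ?_⟩
  · obtain ⟨i, -, hi⟩ := h 0 h0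
    exact hi rfl
  · obtain ⟨i, hi⟩ := Finsupp.ne_iff.1 (ne_of_mem_of_not_mem hm h)
    exact ⟨i, Set.mem_univ i, hi⟩

theorem varIdeal_univ_ne_top [Nontrivial K] : varIdeal K (Set.univ : Set σ) ≠ ⊤ := by
  rw [Ideal.ne_top_iff_one, mem_varIdeal_univ_iff, coeff_zero_one]
  exact one_ne_zero

theorem isSMulRegular_X_varIdeal {y : σ} {s : Set σ} (hy : y ∉ s) :
    IsSMulRegular (MvPolynomial σ K ⧸ varIdeal K s) (X y : MvPolynomial σ K) := by
  rw [varIdeal_eq_monomialIdeal]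
  refine isSMulRegular_X_monomialIdeal ?_
  rintro _ ⟨i, hi, rfl⟩
  exact Finsupp.single_eq_of_ne (ne_of_mem_of_not_mem hi hy).symm

theorem X_smul_residue_eq_zero (y : σ)
    (n : cyclicModule (varIdeal K (Set.univ : Set σ))) :
    (X y : MvPolynomial σ K) • n = 0 := by
  obtain ⟨a, rfl⟩ := Submodule.Quotient.mk_surjective _ n
  exact (Submodule.Quotient.mk_eq_zero _).2
    (Ideal.mul_mem_right _ _ (X_mem_varIdeal (Set.mem_univ y)))

theorem hasProjectiveDimensionLE_varIdeal (s : Finset σ) :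
    HasProjectiveDimensionLE (cyclicModule (varIdeal K (s : Set σ))) s.card := by
  classical
  induction s using Finset.induction_on with
  | empty =>
    rw [varIdeal, Finset.coe_empty, Set.image_empty, Ideal.span_empty]
    exact hasProjectiveDimensionLE_cyclicModule_bot
  | insert y t hy ih =>
    rw [Finset.card_insert_of_notMem hy, Finset.coe_insert, varIdeal_insert]
    exact hasProjectiveDimensionLE_sup_span_singleton (isSMulRegular_X_varIdeal hy) ih

theorem mk₀_cyclicMap_ne_zero {R : Type*} [CommRing R] {I J : Ideal R} (h : I ≤ J) (hJ : J ≠ ⊤) :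
    Ext.mk₀ (cyclicMap h) ≠ 0 := by
  intro h0
  have hf := congrArg (fun f ↦ f.hom (Submodule.Quotient.mk 1)) ((Ext.mk₀_eq_zero_iff _).1 h0)
  exact (Ideal.ne_top_iff_one J).1 hJ ((Submodule.Quotient.mk_eq_zero J).1 hf)

theorem exists_ext_varIdeal_ne_zero [Nontrivial K] (s : Finset σ) :
    ∃ e : Ext (cyclicModule (varIdeal K (s : Set σ)))
      (cyclicModule (varIdeal K (Set.univ : Set σ))) s.card, e ≠ 0 := by
  classical
  induction s using Finset.induction_on with
  | empty =>
    exact ⟨_, mk₀_cyclicMap_ne_zero (varIdeal_mono (Set.subset_univ _)) varIdeal_univ_ne_top⟩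
  | insert y t hy ih =>
    obtain ⟨e, he⟩ := ih
    rw [Finset.card_insert_of_notMem hy, Finset.coe_insert, varIdeal_insert]
    have h := IsColonTriple.self_of_isSMulRegular (isSMulRegular_X_varIdeal (K := K) hy)
    exact ⟨h.extClass.comp e (add_comm 1 _), (map_ne_zero_iff _
      (h.injective_extClass_precomp le_rfl (X_smul_residue_eq_zero y) t.card)).2 he⟩

theorem surjective_extRestrict_zero {R : Type*} [CommRing R] {I J : Ideal R} (h : I ≤ J) :
    Function.Surjective (extRestrict h (cyclicModule J) 0) := by
  intro e
  obtain ⟨f, rfl⟩ : ∃ f, e = Ext.mk₀ f := ⟨_, (Ext.mk₀_homEquiv₀_apply e).symm⟩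
  obtain ⟨c, hc⟩ := Submodule.Quotient.mk_surjective _ (f.hom (Submodule.Quotient.mk 1))
  refine ⟨Ext.mk₀ (cyclicMul c fun a ha ↦ Ideal.mul_mem_left _ _ ha),
    (Ext.mk₀_comp_mk₀ _ _).trans (congrArg Ext.mk₀ (cyclicModule_hom_ext fun a ↦ ?_))⟩
  calc (Submodule.Quotient.mk (c * a) : R ⧸ J) = a • Submodule.Quotient.mk c := by
        rw [← Submodule.Quotient.mk_smul, smul_eq_mul, mul_comm]
    _ = f.hom (a • Submodule.Quotient.mk 1) := by rw [hc, map_smul]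
    _ = f.hom (Submodule.Quotient.mk a) := by
        rw [← Submodule.Quotient.mk_smul, smul_eq_mul, mul_one]

theorem surjective_extRestrict_varIdeal (s : Finset σ)
    (h : varIdeal K (s : Set σ) ≤ varIdeal K Set.univ) :
    Function.Surjective (extRestrict h (cyclicModule (varIdeal K Set.univ)) s.card) := by
  classical
  induction s using Finset.induction_on with
  | empty => exact surjective_extRestrict_zero h
  | insert y t hy ih =>
    have huniv : varIdeal K (Set.univ : Set σ) = varIdeal K {y}ᶜ ⊔ Ideal.span {X y} := by
      rw [← varIdeal_insert, ← Set.union_singleton, Set.compl_union_self]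
    have hins : varIdeal K (insert y t : Finset σ) = varIdeal K t ⊔ Ideal.span {X y} := by
      rw [Finset.coe_insert, varIdeal_insert]
    have hty : (t : Set σ) ⊆ {y}ᶜ := Set.subset_compl_singleton_iff.2 hy
    rw [Finset.card_insert_of_notMem hy]
    exact surjective_extRestrict_sup_span_singleton (varIdeal_mono hty) hins huniv
      (isSMulRegular_X_varIdeal hy) (isSMulRegular_X_varIdeal (Set.notMem_compl_iff.2 rfl))
      (hasProjectiveDimensionLE_varIdeal t) (varIdeal_mono (Set.subset_univ _)) (ih _) h

theorem extRestrict_varIdeal_sup_eq_zero {y : σ} {t : Finset σ} (hy : y ∉ t)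
    (h : varIdeal K (t : Set σ) ⊔ Ideal.span {X y} * varIdeal K Set.univ ≤
      varIdeal K (t : Set σ) ⊔ Ideal.span {X y}) :
    extRestrict h (cyclicModule (varIdeal K Set.univ)) (t.card + 1) = 0 :=
  extRestrict_eq_zero_of_surjective (varIdeal_mono (Set.subset_univ _))
    (isSMulRegular_X_varIdeal hy) (hasProjectiveDimensionLE_varIdeal t)
    (surjective_extRestrict_varIdeal t _) h

end VariableIdeals

/-! ### Minimal graded covers -/

section MinimalCovers

open Abelian

universe u

variable {R : Type u} [CommRing R] {𝔪 : Ideal R} {ι M : Type u} [AddCommGroup M] [Module R M]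
  {φ : (ι → R) →ₗ[R] M}

/-- A surjection from a free module all of whose relations have coefficients in `𝔪`; for finite
`ι` it becomes an isomorphism after tensoring with `R / 𝔪`. -/
structure IsMinimalCover (𝔪 : Ideal R) (φ : (ι → R) →ₗ[R] M) : Prop where
  surjective : Function.Surjective φ
  mem_of_apply_eq_zero : ∀ f, φ f = 0 → ∀ i, f i ∈ 𝔪

theorem apply_eq_zero_of_forall_mem [Finite ι] (f : (ι → R) →ₗ[R] R ⧸ 𝔪) {v : ι → R}
    (hv : ∀ i, v i ∈ 𝔪) : f v = 0 := by
  classical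
  have := Fintype.ofFinite ι
  rw [pi_eq_sum_univ' v, map_sum]
  refine Finset.sum_eq_zero fun i _ ↦ ?_
  obtain ⟨c, hc⟩ := Submodule.Quotient.mk_surjective 𝔪 (f (Pi.single i 1))
  rw [map_smul, ← hc, ← Submodule.Quotient.mk_smul]
  exact (Submodule.Quotient.mk_eq_zero 𝔪).2 (𝔪.mul_mem_right c (hv i))

namespace IsMinimalCover

theorem exists_comp_eq_mkQ_proj (hφ : IsMinimalCover 𝔪 φ) (i : ι) :
    ∃ χ : M →ₗ[R] R ⧸ 𝔪, ∀ f, χ (φ f) = Submodule.Quotient.mk (f i) := by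
  have hker : LinearMap.ker φ ≤ LinearMap.ker (𝔪.mkQ ∘ₗ LinearMap.proj i) := fun f hf ↦
    (Submodule.Quotient.mk_eq_zero _).2 (hφ.mem_of_apply_eq_zero f hf i)
  refine ⟨(LinearMap.ker φ).liftQ _ hker ∘ₗ (φ.quotKerEquivOfSurjective hφ.surjective).symm,
    fun f ↦ ?_⟩
  rw [LinearMap.comp_apply, LinearEquiv.coe_coe, LinearMap.quotKerEquivOfSurjective_symm_apply]
  rfl

theorem subsingleton_of_forall_hom_eq_zero (hφ : IsMinimalCover 𝔪 φ) (h𝔪 : 𝔪 ≠ ⊤)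
    (hM : ∀ χ : M →ₗ[R] R ⧸ 𝔪, χ = 0) : Subsingleton M := by
  suffices IsEmpty ι from hφ.surjective.subsingleton
  refine ⟨fun i ↦ (Ideal.ne_top_iff_one 𝔪).1 h𝔪 ?_⟩
  obtain ⟨χ, hχ⟩ := hφ.exists_comp_eq_mkQ_proj i
  rw [← Submodule.Quotient.mk_eq_zero, ← hχ fun _ ↦ 1, hM χ, LinearMap.zero_apply]

theorem ext_ker_eq_zero [Finite ι] (hφ : IsMinimalCover 𝔪 φ) {n : ℕ}
    (hM : ∀ e : Ext (ModuleCat.of R M) (cyclicModule 𝔪) (n + 1), e = 0)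
    (e : Ext (ModuleCat.of R (LinearMap.ker φ)) (cyclicModule 𝔪) n) : e = 0 := by
  have hex := LinearMap.shortExact_shortComplexKer hφ.surjective
  obtain ⟨e', rfl⟩ := Ext.contravariant_sequence_exact₁ hex _ e (add_comm 1 n) (hM _)
  cases n with
  | zero =>
    obtain ⟨f, rfl⟩ : ∃ f, e' = Ext.mk₀ f := ⟨_, (Ext.mk₀_homEquiv₀_apply e').symm⟩
    rw [Ext.mk₀_comp_mk₀, Ext.mk₀_eq_zero_iff]
    exact ModuleCat.hom_ext <| LinearMap.ext fun v ↦
      apply_eq_zero_of_forall_mem f.hom (hφ.mem_of_apply_eq_zero v.1 v.2)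
  | succ n =>
    have hproj : Projective (ModuleCat.of R (ι → R)) :=
      (IsProjective.iff_projective _).1 inferInstance
    have he' : e' = 0 := Ext.eq_zero_of_projective _
    rw [he', Ext.comp_zero]

end IsMinimalCover

end MinimalCovers

section IrredundantGenerators

variable {R M : Type*} [CommRing R] [AddCommGroup M] [Module R M]

theorem exists_irredundant_finset_span_eq {T : Set M} (hT : (Submodule.span R T).FG) :
    ∃ s : Finset M, ↑s ⊆ T ∧ Submodule.span R (s : Set M) = Submodule.span R T ∧
      ∀ x ∈ s, x ∉ Submodule.span R ((s : Set M) \ {x}) := by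
  classical
  obtain ⟨s₀, hs₀, hspan₀⟩ := (Submodule.fg_span_iff_fg_span_finset_subset T).1 hT
  obtain ⟨s, ⟨hsT, hspan⟩, hmin⟩ := exists_minimal_of_wellFoundedLT
    (fun s : Finset M ↦ ↑s ⊆ T ∧ Submodule.span R (s : Set M) = Submodule.span R T)
    ⟨s₀, hs₀, hspan₀.symm⟩
  refine ⟨s, hsT, hspan, fun x hx hxs ↦ ?_⟩
  have herase : Submodule.span R (s.erase x : Set M) = Submodule.span R T := by
    rw [← hspan, Finset.coe_erase, ← Submodule.span_insert_eq_span hxs,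
      Set.insert_sdiff_singleton, Set.insert_eq_of_mem (Finset.mem_coe.2 hx)]
  exact Finset.notMem_erase x s
    (hmin ⟨(Finset.coe_subset.2 (s.erase_subset x)).trans hsT, herase⟩ (s.erase_subset x) hx)

theorem not_isUnit_of_linearCombination_eq_zero {s : Finset M} {x : s}
    (hx : (x : M) ∉ Submodule.span R ((s : Set M) \ {(x : M)})) {f : s → R}
    (hf : Fintype.linearCombination R ((↑) : s → M) f = 0) : ¬ IsUnit (f x) := by
  classical
  refine fun hu ↦ hx ((Submodule.smul_mem_iff_of_isUnit _ hu).1 ?_)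
  rw [Fintype.linearCombination_apply, ← Finset.add_sum_erase _ _ (Finset.mem_univ x)] at hf
  rw [eq_neg_of_add_eq_zero_left hf]
  refine neg_mem (Submodule.sum_mem _ fun y hy ↦ Submodule.smul_mem _ _ (Submodule.subset_span ?_))
  exact ⟨y.2, fun hyx ↦ Finset.ne_of_mem_erase hy (Subtype.ext hyx)⟩

end IrredundantGenerators

section ShiftedGradings

open Filter

variable {A S : Type*} [CommRing A] [SetLike S A] [AddSubmonoidClass S A] (𝒜 : ℕ → S)
  [GradedRing 𝒜]

/-- The projection of `A(-d)` onto its component of degree `e`, where `A(-d)` is the ring `A`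
graded with `1` in degree `d`. -/
def shiftProj (d e : ℕ) : A →+ A :=
  if d ≤ e then GradedRing.proj 𝒜 (e - d) else 0

theorem shiftProj_of_le {d e : ℕ} (h : d ≤ e) (a : A) :
    shiftProj 𝒜 d e a = DirectSum.decompose 𝒜 a (e - d) := by
  rw [shiftProj, if_pos h, GradedRing.proj_apply]

theorem shiftProj_of_lt {d e : ℕ} (h : e < d) (a : A) : shiftProj 𝒜 d e a = 0 := by
  rw [shiftProj, if_neg h.not_ge, AddMonoidHom.zero_apply]

theorem shiftProj_shiftProj (d e : ℕ) (a : A) :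
    shiftProj 𝒜 d e (shiftProj 𝒜 d e a) = shiftProj 𝒜 d e a := by
  rcases lt_or_ge e d with h | h
  · rw [shiftProj_of_lt 𝒜 h, shiftProj_of_lt 𝒜 h]
  · rw [shiftProj_of_le 𝒜 h, shiftProj_of_le 𝒜 h,
      DirectSum.decompose_of_mem_same 𝒜 (SetLike.coe_mem _)]

theorem shiftProj_mul {d c e : ℕ} {g : A} (hg : shiftProj 𝒜 d c g = g) (a : A) :
    shiftProj 𝒜 d e (a * g) = shiftProj 𝒜 c e a * g := by
  rcases lt_or_ge c d with hcd | hcd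
  · rw [← hg, shiftProj_of_lt 𝒜 hcd, mul_zero, mul_zero, map_zero]
  have hmem : g ∈ 𝒜 (c - d) := by
    rw [← hg, shiftProj_of_le 𝒜 hcd]
    exact SetLike.coe_mem _
  rcases lt_or_ge e d with hed | hed
  · rw [shiftProj_of_lt 𝒜 hed, shiftProj_of_lt 𝒜 (hed.trans_le hcd), zero_mul]
  rw [shiftProj_of_le 𝒜 hed]
  rcases lt_or_ge e c with hec | hec
  · rw [DirectSum.coe_decompose_mul_of_right_mem_of_not_le 𝒜 hmem (by lia),
      shiftProj_of_lt 𝒜 hec, zero_mul]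
  · rw [DirectSum.coe_decompose_mul_of_right_mem_of_le 𝒜 hmem (by lia), shiftProj_of_le 𝒜 hec,
      tsub_tsub_tsub_cancel_right hcd]

theorem eventually_sum_range_decompose_eq (a : A) :
    ∀ᶠ n in atTop, ∑ e ∈ Finset.range n, (DirectSum.decompose 𝒜 a e : A) = a := by
  classical
  obtain ⟨N, hN⟩ := Finset.exists_nat_subset_range (DirectSum.decompose 𝒜 a).support
  filter_upwards [eventually_ge_atTop N] with n hn
  have hsupp := hN.trans (Finset.range_mono hn)
  refine (Finset.sum_subset hsupp fun e _ he ↦ ?_).symm.trans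
    (DirectSum.sum_support_decompose 𝒜 a)
  rw [DFinsupp.notMem_support_iff.1 he, ZeroMemClass.coe_zero]

theorem eventually_sum_range_shiftProj_eq (d : ℕ) (a : A) :
    ∀ᶠ n in atTop, ∑ e ∈ Finset.range n, shiftProj 𝒜 d e a = a := by
  rw [← Filter.map_add_atTop_eq_nat d, Filter.eventually_map]
  filter_upwards [eventually_sum_range_decompose_eq 𝒜 a] with n hn
  rw [add_comm, Finset.sum_range_add, Finset.sum_eq_zero fun e he ↦
    shiftProj_of_lt 𝒜 (Finset.mem_range.1 he) a, zero_add]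
  refine (Finset.sum_congr rfl fun e _ ↦ ?_).trans hn
  rw [shiftProj_of_le 𝒜 (Nat.le_add_right d e), Nat.add_sub_cancel_left]

variable {ι : Type*}

/-- The projection of the graded free module `⨁ i, A(-d i)` onto its component of degree `e`. -/
def gradedComponent (d : ι → ℕ) (e : ℕ) : (ι → A) →+ (ι → A) :=
  AddMonoidHom.mk' (fun v i ↦ shiftProj 𝒜 (d i) e (v i)) fun v w ↦
    funext fun i ↦ map_add _ (v i) (w i)

theorem gradedComponent_apply (d : ι → ℕ) (e : ℕ) (v : ι → A) (i : ι) :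
    gradedComponent 𝒜 d e v i = shiftProj 𝒜 (d i) e (v i) :=
  rfl

theorem gradedComponent_gradedComponent (d : ι → ℕ) (e : ℕ) (v : ι → A) :
    gradedComponent 𝒜 d e (gradedComponent 𝒜 d e v) = gradedComponent 𝒜 d e v :=
  funext fun _ ↦ shiftProj_shiftProj 𝒜 _ _ _

theorem exists_sum_range_gradedComponent_eq [Finite ι] (d : ι → ℕ) (v : ι → A) :
    ∃ n, ∑ e ∈ Finset.range n, gradedComponent 𝒜 d e v = v := by
  obtain ⟨n, hn⟩ :=
    (eventually_all.2 fun i ↦ eventually_sum_range_shiftProj_eq 𝒜 (d i) (v i)).exists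
  exact ⟨n, funext fun i ↦ (Finset.sum_apply _ _ _).trans (hn i)⟩

theorem gradedComponent_linearCombination {s : Finset (ι → A)} {d : ι → ℕ} {c : s → ℕ}
    (hc : ∀ g : s, gradedComponent 𝒜 d (c g) g = g) (e : ℕ) (f : s → A) :
    gradedComponent 𝒜 d e (Fintype.linearCombination A (↑) f) =
      Fintype.linearCombination A (↑) (gradedComponent 𝒜 c e f) := by
  rw [Fintype.linearCombination_apply, Fintype.linearCombination_apply, map_sum]
  exact Finset.sum_congr rfl fun g _ ↦ funext fun i ↦ shiftProj_mul 𝒜 (congrFun (hc g) i) (f g)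

/-- A submodule of the graded free module `⨁ i, A(-d i)` that contains the homogeneous components
of its elements. -/
def IsShiftHomogeneous (d : ι → ℕ) (N : Submodule A (ι → A)) : Prop :=
  ∀ e, ∀ v ∈ N, gradedComponent 𝒜 d e v ∈ N

variable {𝒜}

theorem IsShiftHomogeneous.span_homogeneous_eq [Finite ι] {d : ι → ℕ} {N : Submodule A (ι → A)}
    (hN : IsShiftHomogeneous 𝒜 d N) :
    Submodule.span A {g | g ∈ N ∧ ∃ c, gradedComponent 𝒜 d c g = g} = N := by
  refine le_antisymm (Submodule.span_le.2 fun g hg ↦ hg.1) fun v hv ↦ ?_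
  obtain ⟨n, hn⟩ := exists_sum_range_gradedComponent_eq 𝒜 d v
  rw [← hn]
  exact Submodule.sum_mem _ fun e _ ↦ Submodule.subset_span
    ⟨hN e v hv, e, gradedComponent_gradedComponent 𝒜 d e v⟩

end ShiftedGradings

section GradedCovers

open Abelian

universe u

variable {A : Type u} {S : Type*} [CommRing A] [SetLike S A] [AddSubmonoidClass S A]
  (𝒜 : ℕ → S) [GradedRing 𝒜]

/-- `M` has a finite free cover that is minimal with respect to the irrelevant ideal and whose
kernel is homogeneous for a suitable choice of degrees of the basis vectors. The grading is only
recorded on the kernel, since this is all that passes from `M` to its first syzygy module. -/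
def HasMinimalGradedCover (M : Type u) [AddCommGroup M] [Module A M] : Prop :=
  ∃ (ι : Type u) (_ : Finite ι) (d : ι → ℕ) (φ : (ι → A) →ₗ[A] M),
    IsMinimalCover (HomogeneousIdeal.irrelevant 𝒜).toIdeal φ ∧
      IsShiftHomogeneous 𝒜 d (LinearMap.ker φ)

variable {𝒜}

theorem hasMinimalGradedCover_quotient {I : Ideal A} (hI : I.IsHomogeneous 𝒜)
    (hle : I ≤ (HomogeneousIdeal.irrelevant 𝒜).toIdeal) : HasMinimalGradedCover 𝒜 (A ⧸ I) := by
  let φ : (PUnit.{u + 1} → A) →ₗ[A] A ⧸ I := I.mkQ ∘ₗ LinearMap.proj PUnit.unit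
  have hφ (f : PUnit → A) : φ f = 0 ↔ f PUnit.unit ∈ I := Submodule.Quotient.mk_eq_zero I
  refine ⟨PUnit, inferInstance, fun _ ↦ 0, φ, ⟨fun a ↦ ?_, fun f hf _ ↦ hle ((hφ f).1 hf)⟩,
    fun e f hf ↦ (hφ _).2 ?_⟩
  · obtain ⟨a, rfl⟩ := Submodule.Quotient.mk_surjective I a
    exact ⟨fun _ ↦ a, rfl⟩
  · rw [gradedComponent_apply, shiftProj_of_le 𝒜 e.zero_le]
    exact hI _ ((hφ f).1 hf)

-- A homogeneous relation involving a generator of its own degree has a unit coefficient there,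
-- so irredundant homogeneous generators only satisfy relations with coefficients in the
-- irrelevant ideal.
theorem IsShiftHomogeneous.hasMinimalGradedCover [IsNoetherianRing A]
    (h𝒜 : ∀ a ∈ 𝒜 0, a ≠ 0 → IsUnit a) {ι : Type u} [Finite ι] {d : ι → ℕ}
    {N : Submodule A (ι → A)} (hN : IsShiftHomogeneous 𝒜 d N) : HasMinimalGradedCover 𝒜 N := by
  obtain ⟨s, hsN, hspan, hirr⟩ := exists_irredundant_finset_span_eq (R := A)
    (T := {g | g ∈ N ∧ ∃ c, gradedComponent 𝒜 d c g = g}) (IsNoetherian.noetherian _)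
  rw [hN.span_homogeneous_eq] at hspan
  choose c hc using fun g : s ↦ (hsN g.2).2
  let ψ : (s → A) →ₗ[A] (ι → A) := Fintype.linearCombination A (↑)
  have hψ (e : ℕ) {f : s → A} (hf : ψ f = 0) : ψ (gradedComponent 𝒜 c e f) = 0 := by
    rw [← gradedComponent_linearCombination 𝒜 hc, hf, map_zero]
  have hrange : LinearMap.range ψ = N := by
    rw [Fintype.range_linearCombination, Subtype.range_coe, hspan]
  subst hrange
  refine ⟨s, inferInstance, c, ψ.rangeRestrict, ⟨ψ.surjective_rangeRestrict, fun f hf g ↦ ?_⟩, ?_⟩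
  · rw [HomogeneousIdeal.mem_iff, HomogeneousIdeal.mem_irrelevant_iff]
    by_contra hne
    refine not_isUnit_of_linearCombination_eq_zero (hirr g g.2)
      (hψ (c g) (congrArg Subtype.val hf)) ?_
    rw [gradedComponent_apply, shiftProj_of_le 𝒜 le_rfl, tsub_self]
    exact h𝒜 _ (SetLike.coe_mem _) hne
  · rw [LinearMap.ker_rangeRestrict]
    exact fun e f hf ↦ hψ e hf

theorem HasMinimalGradedCover.hasProjectiveDimensionLT [Nontrivial A] [IsNoetherianRing A]
    (h𝒜 : ∀ a ∈ 𝒜 0, a ≠ 0 → IsUnit a) {n : ℕ} {M : Type u} [AddCommGroup M] [Module A M]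
    (hM : HasMinimalGradedCover 𝒜 M) (hn : HasProjectiveDimensionLE (ModuleCat.of A M) n)
    (hExt : ∀ e : Ext (ModuleCat.of A M)
      (cyclicModule (HomogeneousIdeal.irrelevant 𝒜).toIdeal) n, e = 0) :
    HasProjectiveDimensionLT (ModuleCat.of A M) n := by
  induction n generalizing M with
  | zero =>
    obtain ⟨ι, _, d, φ, hφ, -⟩ := hM
    rw [hasProjectiveDimensionLT_zero_iff_isZero, ModuleCat.isZero_iff_subsingleton]
    refine hφ.subsingleton_of_forall_hom_eq_zero ?_ fun χ ↦ ?_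
    · rw [HomogeneousIdeal.toIdeal_irrelevant]
      exact RingHom.ker_ne_top _
    · exact congrArg ModuleCat.Hom.hom
        ((Ext.mk₀_eq_zero_iff _).1 (hExt (Ext.mk₀ (ModuleCat.ofHom χ))))
  | succ n ih =>
    obtain ⟨ι, _, d, φ, hφ, hker⟩ := hM
    have hex := LinearMap.shortExact_shortComplexKer hφ.surjective
    have hproj : Projective (ModuleCat.of A (ι → A)) :=
      (IsProjective.iff_projective _).1 inferInstance
    have hsyz : HasProjectiveDimensionLT (ModuleCat.of A (LinearMap.ker φ)) n :=
      ih (hker.hasMinimalGradedCover h𝒜) ((hex.hasProjectiveDimensionLT_X₃_iff n hproj).1 hn)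
        (hφ.ext_ker_eq_zero hExt)
    have hfree := projective_iff_hasProjectiveDimensionLT_one.1 hproj
    exact hex.hasProjectiveDimensionLT_X₃ n hsyz (hasProjectiveDimensionLT_of_ge _ 1 _ (by lia))

end GradedCovers

section PolynomialRing

open Abelian

attribute [local instance] MvPolynomial.gradedAlgebra

theorem toIdeal_irrelevant_homogeneousSubmodule {σ K : Type*} [CommRing K] :
    (HomogeneousIdeal.irrelevant (homogeneousSubmodule σ K)).toIdeal = varIdeal K Set.univ := by
  ext p
  rw [HomogeneousIdeal.mem_iff, HomogeneousIdeal.mem_irrelevant_iff, mem_varIdeal_univ_iff]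
  have hproj : GradedRing.proj (homogeneousSubmodule σ K) 0 p = homogeneousComponent 0 p :=
    decomposition.decompose'_apply p 0
  rw [hproj, homogeneousComponent_zero, C_eq_zero]

theorem isHomogeneous_monomialIdeal {σ K : Type*} [CommRing K] (s : Set (σ →₀ ℕ)) :
    (monomialIdeal K s).IsHomogeneous (homogeneousSubmodule σ K) := by
  refine Ideal.homogeneous_span _ _ ?_
  rintro _ ⟨a, -, rfl⟩
  exact ⟨a.degree, isHomogeneous_monomial 1 rfl⟩

variable {σ K : Type*} [Field K]

theorem isUnit_of_mem_homogeneousSubmodule_zero {p : MvPolynomial σ K}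
    (hp : p ∈ homogeneousSubmodule σ K 0) (hp0 : p ≠ 0) : IsUnit p := by
  rw [homogeneousSubmodule_zero, Submodule.mem_one] at hp
  obtain ⟨a, rfl⟩ := hp
  exact (IsUnit.mk0 a (ne_zero_of_map hp0)).map C

theorem exists_ext_ne_zero_of_isHomogeneous [Finite σ] {I : Ideal (MvPolynomial σ K)}
    (hI : I.IsHomogeneous (homogeneousSubmodule σ K)) (hle : I ≤ varIdeal K Set.univ) {p : ℕ}
    (hp : ∀ m, HasProjectiveDimensionLE (cyclicModule I) m ↔ p ≤ m) :
    ∃ e : Ext (cyclicModule I) (cyclicModule (varIdeal K (Set.univ : Set σ))) p, e ≠ 0 := by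
  cases p with
  | zero => exact ⟨_, mk₀_cyclicMap_ne_zero hle varIdeal_univ_ne_top⟩
  | succ p =>
    rw [← toIdeal_irrelevant_homogeneousSubmodule] at hle ⊢
    by_contra! hExt
    have hlt := (hasMinimalGradedCover_quotient hI hle).hasProjectiveDimensionLT
      (fun _ ↦ isUnit_of_mem_homogeneousSubmodule_zero) ((hp (p + 1)).2 le_rfl) hExt
    exact Nat.not_succ_le_self p ((hp p).1 hlt)

end PolynomialRing

/-! ### Stanley-Reisner ideals of cones -/

section SquarefreeMonomials

variable {σ K : Type*} [CommRing K] {T : Finset σ}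

theorem prod_X_mem_varIdeal {s : Set σ} {a : σ} (haT : a ∈ T) (has : a ∈ s) :
    ∏ w ∈ T, (X w : MvPolynomial σ K) ∈ varIdeal K s :=
  Ideal.mem_of_dvd _ (Finset.dvd_prod_of_mem X haT) (X_mem_varIdeal has)

theorem prod_X_mem_span_mul_varIdeal {s : Set σ} {a b : σ} (haT : a ∈ T) (hbT : b ∈ T)
    (hba : b ≠ a) (hbs : b ∈ s) :
    ∏ w ∈ T, (X w : MvPolynomial σ K) ∈ Ideal.span {X a} * varIdeal K s := by
  classical
  rw [← Finset.mul_prod_erase T X haT]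
  exact Ideal.mul_mem_mul (Ideal.mem_span_singleton_self _)
    (prod_X_mem_varIdeal (Finset.mem_erase.2 ⟨hba, hbT⟩) hbs)

end SquarefreeMonomials

section StanleyReisner

open Abelian

variable {V : Type*} {K : Type*} [Field K] {Δ : Set (Finset V)} {F : Finset V}

theorem IsSimplicialComplex.exists_mem_notMem (hΔ : IsSimplicialComplex Δ) (hF : F ∈ Δ)
    {S : Finset V} (hS : S ∉ Δ) : ∃ v ∈ S, v ∉ F :=
  Finset.not_subset.1 fun h ↦ hS (hΔ.2 F hF S h)

theorem srIdeal_eq_monomialIdeal (K : Type*) [Field K] (Δ : Set (Finset V)) :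
    srIdeal K Δ = monomialIdeal K ((fun S ↦ ∑ v ∈ S, Finsupp.single v 1) '' {S | S ∉ Δ}) := by
  simp only [srIdeal, monomialIdeal, Set.image_image, monomial_sum_one]
  rfl

theorem exists_hasProjectiveDimensionLE_srIdeal [Finite V] (K : Type*) [Field K]
    (Δ : Set (Finset V)) : ∃ m, HasProjectiveDimensionLE (cyclicModule (srIdeal K Δ)) m := by
  obtain ⟨s, hs⟩ := ((Set.toFinite {S | S ∉ Δ}).image
    (fun S ↦ ∑ v ∈ S, Finsupp.single v 1)).exists_finset_coe
  rw [srIdeal_eq_monomialIdeal, ← hs]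
  exact exists_hasProjectiveDimensionLE_monomialIdeal _

theorem srIdeal_le_iff {J : Ideal (MvPolynomial V K)} :
    srIdeal K Δ ≤ J ↔ ∀ S ∉ Δ, ∏ v ∈ S, X v ∈ J := by
  rw [srIdeal, Ideal.span_le, Set.image_subset_iff]
  rfl

/-- The extension of the Stanley-Reisner ideal of `Δ` to the polynomial ring with the additional
variable `x₀`, which is `X none`. -/
noncomputable def srIdealExt (K : Type*) [Field K] (Δ : Set (Finset V)) :
    Ideal (MvPolynomial (Option V) K) :=
  (srIdeal K Δ).map (rename some : MvPolynomial V K →ₐ[K] MvPolynomial (Option V) K)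

theorem srIdealExt_eq_monomialIdeal (K : Type*) [Field K] (Δ : Set (Finset V)) :
    srIdealExt K Δ = monomialIdeal K (Finsupp.mapDomain some ''
      ((fun S ↦ ∑ v ∈ S, Finsupp.single v 1) '' {S | S ∉ Δ})) := by
  rw [srIdealExt, srIdeal_eq_monomialIdeal, map_rename_monomialIdeal]

theorem isSMulRegular_X_none_srIdealExt (K : Type*) [Field K] (Δ : Set (Finset V)) :
    IsSMulRegular (MvPolynomial (Option V) K ⧸ srIdealExt K Δ)
      (X none : MvPolynomial (Option V) K) := by
  rw [srIdealExt_eq_monomialIdeal]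
  refine isSMulRegular_X_monomialIdeal ?_
  rintro _ ⟨a, -, rfl⟩
  exact Finsupp.mapDomain_of_notMem_range _ _ (by simp)

theorem srIdealExt_le_iff {J : Ideal (MvPolynomial (Option V) K)} :
    srIdealExt K Δ ≤ J ↔ ∀ S ∉ Δ, ∏ w ∈ S.map Function.Embedding.some, X w ∈ J := by
  simp only [srIdealExt, Ideal.map_le_iff_le_comap, srIdeal_le_iff, Ideal.mem_comap, map_prod,
    rename_X, Finset.prod_map, Function.Embedding.some_apply]

theorem srIdealExt_le_varIdeal (hΔ : IsSimplicialComplex Δ) (hF : F ∈ Δ) :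
    srIdealExt K Δ ≤ varIdeal K (some '' (F : Set V)ᶜ) := by
  refine srIdealExt_le_iff.2 fun S hS ↦ ?_
  obtain ⟨v, hvS, hvF⟩ := hΔ.exists_mem_notMem hF hS
  exact prod_X_mem_varIdeal (Finset.mem_map_of_mem _ hvS) ⟨v, hvF, rfl⟩

-- No vertex is a nonface, so a nonface meeting `Fᶜ` only in `y` contains a second vertex.
theorem srIdealExt_le_varIdeal_sup (hΔ : IsSimplicialComplex Δ) (hF : F ∈ Δ) (y : V) :
    srIdealExt K Δ ≤ varIdeal K (some '' ((F : Set V)ᶜ \ {y})) ⊔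
      Ideal.span {X (some y)} * varIdeal K Set.univ := by
  refine srIdealExt_le_iff.2 fun S hS ↦ ?_
  obtain ⟨v, hvS, hvF⟩ := hΔ.exists_mem_notMem hF hS
  by_cases hvy : v = y
  · obtain ⟨w, hwS, hwv⟩ := hΔ.exists_mem_notMem (hΔ.1 v) hS
    rw [← hvy]
    exact Ideal.mem_sup_right (prod_X_mem_span_mul_varIdeal (Finset.mem_map_of_mem _ hvS)
      (Finset.mem_map_of_mem _ hwS) (by simpa using hwv) (Set.mem_univ _))
  · exact Ideal.mem_sup_left
      (prod_X_mem_varIdeal (Finset.mem_map_of_mem _ hvS) ⟨v, ⟨hvF, hvy⟩, rfl⟩)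

theorem exists_ext_srIdealExt_ne_zero [Finite V] (hΔ : IsSimplicialComplex Δ) (hF : F ∈ Δ) {p : ℕ}
    (hp : ∀ m, HasProjectiveDimensionLE (cyclicModule (srIdealExt K Δ)) m ↔ p ≤ m) :
    ∃ e : Ext (cyclicModule (srIdealExt K Δ))
      (cyclicModule (varIdeal K (Set.univ : Set (Option V)))) p, e ≠ 0 :=
  exists_ext_ne_zero_of_isHomogeneous
    (srIdealExt_eq_monomialIdeal K Δ ▸ isHomogeneous_monomialIdeal _)
    ((srIdealExt_le_varIdeal hΔ hF).trans (varIdeal_mono (Set.subset_univ _))) hp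

section Cone

variable [DecidableEq V]

theorem map_some_mem_coneUnion_iff (hΔ : IsSimplicialComplex Δ) (hF : F ∈ Δ) {S : Finset V} :
    S.map Function.Embedding.some ∈ coneUnion Δ F ↔ S ∈ Δ := by
  refine ⟨?_, fun hS ↦ Or.inl ⟨S, hS, rfl⟩⟩
  rintro (⟨S', hS', h⟩ | h)
  · rwa [← Finset.map_injective _ h]
  · refine hΔ.2 F hF S fun v hv ↦ ?_
    simpa using h (Finset.mem_map_of_mem _ hv)

theorem mem_coneUnion_iff_of_none_mem {T : Finset (Option V)} (hT : none ∈ T) :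
    T ∈ coneUnion Δ F ↔ T ⊆ insert none (F.map Function.Embedding.some) := by
  refine ⟨?_, Or.inr⟩
  rintro (⟨S, -, rfl⟩ | h)
  · simp at hT
  · exact h

theorem srIdeal_coneUnion_le :
    srIdeal K (coneUnion Δ F) ≤
      srIdealExt K Δ ⊔ Ideal.span {X none} * varIdeal K (some '' (F : Set V)ᶜ) := by
  refine srIdeal_le_iff.2 fun T hT ↦ ?_
  by_cases hnone : none ∈ T
  · rw [mem_coneUnion_iff_of_none_mem hnone] at hT
    obtain ⟨w, hwT, hw⟩ := Finset.not_subset.1 hT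
    obtain ⟨v, hv, rfl⟩ : w ∈ some '' (F : Set V)ᶜ := by cases w <;> simp_all
    exact Ideal.mem_sup_right
      (prod_X_mem_span_mul_varIdeal hnone hwT (Option.some_ne_none v) ⟨v, hv, rfl⟩)
  · obtain ⟨S, rfl⟩ : ∃ S : Finset V, S.map Function.Embedding.some = T :=
      ⟨T.eraseNone, by rw [Finset.map_some_eraseNone, Finset.erase_eq_of_notMem hnone]⟩
    exact Ideal.mem_sup_left (srIdealExt_le_iff.1 le_rfl S fun hS ↦ hT (Or.inl ⟨S, hS, rfl⟩))

theorem le_srIdeal_coneUnion (hΔ : IsSimplicialComplex Δ) (hF : F ∈ Δ) :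
    srIdealExt K Δ ⊔ Ideal.span {X none} * varIdeal K (some '' (F : Set V)ᶜ) ≤
      srIdeal K (coneUnion Δ F) := by
  refine sup_le (srIdealExt_le_iff.2 fun S hS ↦ ?_) ?_
  · exact srIdeal_le_iff.1 le_rfl _ (mt (map_some_mem_coneUnion_iff hΔ hF).1 hS)
  · rw [varIdeal, Ideal.span_mul_span', Ideal.span_le]
    rintro _ ⟨_, rfl, _, ⟨_, ⟨v, hv, rfl⟩, rfl⟩, rfl⟩
    have hmem := srIdeal_le_iff (K := K) (Δ := coneUnion Δ F).1 le_rfl {none, some v}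
    rw [Finset.prod_pair (Option.some_ne_none v).symm] at hmem
    refine hmem ?_
    rw [mem_coneUnion_iff_of_none_mem (Finset.mem_insert_self _ _)]
    exact fun h ↦ hv (by simpa using h (Finset.mem_insert_of_mem (Finset.mem_singleton_self _)))

theorem srIdeal_coneUnion (hΔ : IsSimplicialComplex Δ) (hF : F ∈ Δ) :
    srIdeal K (coneUnion Δ F) =
      srIdealExt K Δ ⊔ Ideal.span {X none} * varIdeal K (some '' (F : Set V)ᶜ) :=
  le_antisymm srIdeal_coneUnion_le (le_srIdeal_coneUnion hΔ hF)

variable [Fintype V]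

-- The restriction factors through `R'/J` with `J = (x_v : v ∉ F, v ≠ y) + x_y 𝔪`.
theorem extRestrict_srIdealExt_eq_zero (hΔ : IsSimplicialComplex Δ) (hF : F ∈ Δ)
    (hFX : F ≠ Finset.univ) (h : srIdealExt K Δ ≤ varIdeal K (some '' (F : Set V)ᶜ)) :
    extRestrict h (cyclicModule (varIdeal K Set.univ)) (Fᶜ).card = 0 := by
  obtain ⟨y, hy⟩ : ∃ y, y ∉ F := by simpa [Finset.eq_univ_iff_forall] using hFX
  let t : Finset (Option V) := (Fᶜ.erase y).map Function.Embedding.some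
  have hyt : some y ∉ t := by simp [t]
  have ht : (t : Set (Option V)) = some '' ((F : Set V)ᶜ \ {y}) := by
    rw [Finset.coe_map, Finset.coe_erase, Finset.coe_compl]
    rfl
  have hcard : t.card + 1 = (Fᶜ).card := by
    rw [Finset.card_map, Finset.card_erase_add_one (Finset.mem_compl.2 hy)]
  have hP : varIdeal K (some '' (F : Set V)ᶜ) =
      varIdeal K (t : Set (Option V)) ⊔ Ideal.span {X (some y)} := by
    rw [← varIdeal_insert, ht, ← Set.image_insert_eq, Set.insert_sdiff_singleton,
      Set.insert_eq_of_mem (show y ∈ (F : Set V)ᶜ from hy)]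
  have hJ := srIdealExt_le_varIdeal_sup (K := K) hΔ hF y
  rw [← ht] at hJ
  generalize varIdeal K (some '' (F : Set V)ᶜ) = P at h hP
  subst hP
  rw [← hcard]
  refine AddMonoidHom.ext fun e ↦ ?_
  rw [extRestrict_trans_apply hJ (sup_le_sup_left Ideal.mul_le_left _),
    extRestrict_varIdeal_sup_eq_zero hyt, AddMonoidHom.zero_apply, map_zero,
    AddMonoidHom.zero_apply]

end Cone

end StanleyReisner

/-- STATEMENT 11: for a face `F ≠ X` of `Δ` and `Δ' = Δ ∪ co_{x₀}F`,
`pd K[Δ'] = max (pd K[Δ] + 1) (n − |F|)`. -/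
theorem projDim_coneUnion {V : Type*} [Fintype V] [DecidableEq V]
    (K : Type*) [Field K] (Δ : Set (Finset V)) (hΔ : IsSimplicialComplex Δ)
    (F : Finset V) (hF : F ∈ Δ) (hFX : F ≠ Finset.univ) :
    projDim (ModuleCat.of (MvPolynomial (Option V) K)
        (MvPolynomial (Option V) K ⧸ srIdeal K (coneUnion Δ F))) =
      max (projDim (ModuleCat.of (MvPolynomial V K) (MvPolynomial V K ⧸ srIdeal K Δ)) + 1)
        (Fintype.card V - F.card) := by
  have hPD (m : ℕ) : HasProjectiveDimensionLE (cyclicModule (srIdealExt K Δ)) m ↔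
      projDim (cyclicModule (srIdeal K Δ)) ≤ m :=
    (hasProjectiveDimensionLE_map_rename_some_iff _ m).trans
      (projDim_le_iff (exists_hasProjectiveDimensionLE_srIdeal K Δ) m).symm
  have hP := hasProjectiveDimensionLE_varIdeal (K := K) (Fᶜ.map Function.Embedding.some)
  have hEP := exists_ext_varIdeal_ne_zero (K := K) (Fᶜ.map Function.Embedding.some)
  rw [Finset.card_map, Finset.coe_map, Finset.coe_compl] at hP hEP
  obtain ⟨eP, heP⟩ := hEP
  obtain ⟨eΔ, heΔ⟩ := exists_ext_srIdealExt_ne_zero hΔ hF hPD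
  rw [← Finset.card_compl]
  refine projDim_eq_of_forall_iff fun m ↦ ?_
  rw [srIdeal_coneUnion hΔ hF]
  exact hasProjectiveDimensionLE_sup_mul_iff (srIdealExt_le_varIdeal hΔ hF)
    (isSMulRegular_X_none_srIdealExt K Δ) (X_smul_residue_eq_zero none) ((hPD _).2 le_rfl) hP
    heΔ heP (extRestrict_srIdealExt_eq_zero hΔ hF hFX _) m
end

section
/- For any simplicial complex Δ that is not a simplex and any field K, the Stanley-Reisner ring K[Δ] has a 2-linear resolution if and only if Δ is a generalized tree. -/
open MvPolynomial

variable {V : Type*} [DecidableEq V]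

/-- A generalized tree on the vertex set `W ⊆ V`: either a simplex on `W`, or obtained
from a generalized tree by adding a cone over one of its faces from a new vertex. -/
inductive IsGeneralizedTree : Finset V → Set (Finset V) → Prop
  | simplex (W : Finset V) : IsGeneralizedTree W {S | S ⊆ W}
  | cone (W : Finset V) (Δ : Set (Finset V)) (F : Finset V) (x : V)
      (hΔ : IsGeneralizedTree W Δ) (hF : F ∈ Δ) (hx : x ∉ W) :
      IsGeneralizedTree (insert x W) (Δ ∪ {S | S ⊆ insert x F})

/-- `K[Δ]` has a 2-linear resolution: there is a graded free resolution
`… → F₂ → F₁ → F₀ = R → K[Δ] → 0` in which `F₀ = R` (one generator in degree `0`) and,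
for `i ≥ 1`, `Fᵢ` is generated in degree `i + 1`; equivalently the entries of the matrix
of `F₁ → F₀` are homogeneous of degree `2` and all further matrices have entries
homogeneous of degree `1`. -/
def HasTwoLinearResolution (K : Type*) [Field K] (Δ : Set (Finset V)) : Prop :=
  ∃ (ι : ℕ → Type) (_ : ∀ i, Finite (ι i)) (u : Unique (ι 0))
    (d : ∀ i : ℕ, ((ι (i + 1) →₀ MvPolynomial V K) →ₗ[MvPolynomial V K]
      (ι i →₀ MvPolynomial V K)))
    (ε : ((ι 0 →₀ MvPolynomial V K) →ₗ[MvPolynomial V K]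
      (MvPolynomial V K ⧸ srIdeal K Δ))),
    ε (Finsupp.single u.default 1) = 1 ∧
    Function.Surjective ε ∧
    LinearMap.ker ε = LinearMap.range (d 0) ∧
    (∀ i : ℕ, LinearMap.ker (d i) = LinearMap.range (d (i + 1))) ∧
    (∀ (b : ι 1) (c : ι 0),
      ((d 0) (Finsupp.single b 1)) c ∈ homogeneousSubmodule V K 2) ∧
    (∀ (i : ℕ) (b : ι (i + 2)) (c : ι (i + 1)),
      ((d (i + 1)) (Finsupp.single b 1)) c ∈ homogeneousSubmodule V K 1)

/-!
Linear resolutions pass through mapping cones: if `I` has a linear resolution generated in degree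
two and the colon ideal `I : f` of a quadric `f` is generated by variables, then `I + (f)` again has
one, obtained from the resolution of `I` and a Koszul complex. The Stanley-Reisner ideal of a
generalized tree is generated by the products `X a * X b` over its nonedges; adding these generators
one at a time, those at the last apex first, all colon ideals are generated by variables.

Conversely, let `I = srIdeal K Δ` have a 2-linear resolution. Its generators are quadrics, so `Δ` is
a flag complex. Linearity also forces every Koszul cycle modulo `I` whose coefficients have degree
two to be a boundary modulo `I`. For an edge `a b` let `W` be the set of vertices which are not
common neighbours of `a` and `b`; then `X a * X b • e_{W \ {a, b}}` is such a cycle, and the linear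
coefficients of a chain bounding it form a function on `W` that is constant along every edge except
`a b`. Hence `a b` is a bridge of the graph on `W`. A graph all of whose edges have this property
has a simplicial vertex in every nonempty set of vertices, and eliminating simplicial vertices one
by one exhibits `Δ` as a generalized tree.
-/

section HomogeneousMatrix

attribute [local instance] MvPolynomial.gradedAlgebra

variable {σ R α β γ : Type*} [CommRing R] {j k : ℕ}

theorem homogeneousComponent_add_mul_of_isHomogeneous (j : ℕ) (p : MvPolynomial σ R)
    {q : MvPolynomial σ R} (hq : q.IsHomogeneous k) :
    homogeneousComponent (j + k) (p * q) = homogeneousComponent j p * q := by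
  rw [← decomposition.decompose'_apply, ← decomposition.decompose'_apply]
  exact DirectSum.coe_decompose_mul_add_of_right_mem (homogeneousSubmodule σ R) hq

theorem homogeneousComponent_add_mul_of_isHomogeneous_left (j : ℕ) {p : MvPolynomial σ R}
    (q : MvPolynomial σ R) (hp : p.IsHomogeneous k) :
    homogeneousComponent (j + k) (p * q) = p * homogeneousComponent j q := by
  rw [mul_comm, homogeneousComponent_add_mul_of_isHomogeneous j q hp, mul_comm]

/-- A matrix of polynomials all of whose entries are homogeneous of degree `k`, i.e. the matrix of
a graded map between graded free modules whose generators lie `k` degrees apart. -/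
def IsHomogeneousMatrix (k : ℕ) (D : Matrix α β (MvPolynomial σ R)) : Prop :=
  ∀ a b, (D a b).IsHomogeneous k

namespace IsHomogeneousMatrix

variable [Fintype β]

theorem mul {D : Matrix α β (MvPolynomial σ R)} {E : Matrix β γ (MvPolynomial σ R)}
    (hD : IsHomogeneousMatrix j D) (hE : IsHomogeneousMatrix k E) :
    IsHomogeneousMatrix (j + k) (D * E) :=
  fun a c => IsHomogeneous.sum _ _ _ fun b _ => (hD a b).mul (hE b c)

theorem map_homogeneousComponent_mul {D : Matrix β γ (MvPolynomial σ R)}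
    (hD : IsHomogeneousMatrix k D) (j : ℕ) (w : Matrix α β (MvPolynomial σ R)) :
    (w * D).map (homogeneousComponent (j + k)) = w.map (homogeneousComponent j) * D := by
  ext1 a c
  simp only [Matrix.map_apply, Matrix.mul_apply, map_sum]
  exact Finset.sum_congr rfl fun b _ =>
    homogeneousComponent_add_mul_of_isHomogeneous j _ (hD b c)

theorem map_homogeneousComponent_mul_left {D : Matrix α β (MvPolynomial σ R)}
    (hD : IsHomogeneousMatrix k D) (j : ℕ) (w : Matrix β γ (MvPolynomial σ R)) :
    (D * w).map (homogeneousComponent (j + k)) = D * w.map (homogeneousComponent j) := by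
  ext1 a c
  simp only [Matrix.map_apply, Matrix.mul_apply, map_sum]
  exact Finset.sum_congr rfl fun b _ =>
    homogeneousComponent_add_mul_of_isHomogeneous_left j _ (hD a b)

theorem coeff_zero_mul {D : Matrix β γ (MvPolynomial σ R)} (hD : IsHomogeneousMatrix k D)
    (hk : k ≠ 0) (w : Matrix α β (MvPolynomial σ R)) (a : α) (c : γ) :
    coeff 0 ((w * D) a c) = 0 := by
  rw [Matrix.mul_apply, coeff_sum]
  refine Finset.sum_eq_zero fun b _ => ?_
  have hDbc : coeff 0 (D b c) = 0 := (hD b c).coeff_eq_zero (by simpa using hk.symm)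
  simp only [← constantCoeff_eq, map_mul] at hDbc ⊢
  rw [hDbc, mul_zero]

theorem exists_isHomogeneousMatrix_mul_eq {D : Matrix β γ (MvPolynomial σ R)}
    (hD : IsHomogeneousMatrix k D) {W : Matrix α γ (MvPolynomial σ R)}
    (hW : IsHomogeneousMatrix (j + k) W) (hlift : ∃ U : Matrix α β (MvPolynomial σ R), U * D = W) :
    ∃ U : Matrix α β (MvPolynomial σ R), IsHomogeneousMatrix j U ∧ U * D = W := by
  obtain ⟨U, rfl⟩ := hlift
  refine ⟨U.map (homogeneousComponent j), fun a b => homogeneousComponent_isHomogeneous j _, ?_⟩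
  rw [← hD.map_homogeneousComponent_mul]
  ext1 a c
  exact homogeneousComponent_eq_self (hW a c)

theorem exists_homogeneousComponent_zero_eq_zero_mul_eq {D : Matrix β γ (MvPolynomial σ R)}
    (hD : IsHomogeneousMatrix k D) {W : Matrix α γ (MvPolynomial σ R)}
    (hW : W.map (homogeneousComponent k) = 0)
    (hlift : ∃ U : Matrix α β (MvPolynomial σ R), U * D = W) :
    ∃ U : Matrix α β (MvPolynomial σ R),
      (∀ a b, homogeneousComponent 0 (U a b) = 0) ∧ U * D = W := by
  obtain ⟨U, rfl⟩ := hlift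
  refine ⟨U - U.map (homogeneousComponent 0), fun a b => ?_, ?_⟩
  · simp [homogeneousComponent_zero]
  · rw [Matrix.sub_mul, ← hD.map_homogeneousComponent_mul, zero_add, hW, sub_zero]

end IsHomogeneousMatrix

end HomogeneousMatrix

section LinearResolution

theorem exists_mul_eq_of_exact {S α β γ N : Type*} [CommRing S] [AddCommGroup N] [Module S N]
    [Fintype β] {D : Matrix β γ S} {g : (γ → S) →ₗ[S] N} (hD : Function.Exact D.vecMulLinear g)
    (W : Matrix α γ S) (hW : ∀ a, g (W a) = 0) : ∃ U : Matrix α β S, U * D = W := by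
  choose U hU using fun a => (hD (W a)).1 (hW a)
  exact ⟨Matrix.of U, funext hU⟩

/-- The degree of the entries of the `i`-th matrix of a linear resolution whose ideal is generated
in degree `e`. -/
def stepDegree (e : ℕ) : ℕ → ℕ
  | 0 => e
  | _ + 1 => 1

theorem stepDegree_one (i : ℕ) : stepDegree 1 i = 1 := by
  cases i <;> rfl

theorem stepDegree_pos {e : ℕ} (he : 0 < e) (i : ℕ) : 0 < stepDegree e i := by
  cases i
  exacts [he, one_pos]

variable {σ R : Type*} [CommRing R]

/-- An `e`-linear resolution `⋯ → F₂ → F₁ → F₀ = S → S ⧸ I` over `S = MvPolynomial σ R` by finite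
free modules with chosen bases `ι i`. The differentials are matrices acting on row vectors; the
entries of `d 0` have degree `e` and those of all later matrices have degree `1`. -/
structure LinearResolution (e : ℕ) (I : Ideal (MvPolynomial σ R)) where
  ι : ℕ → Type
  [fintype : ∀ i, Fintype (ι i)]
  [unique : Unique (ι 0)]
  d : ∀ i, Matrix (ι (i + 1)) (ι i) (MvPolynomial σ R)
  exact_zero : Function.Exact (d 0).vecMulLinear (I.mkQ ∘ₗ LinearMap.proj default)
  exact_succ : ∀ i, Function.Exact (d (i + 1)).vecMulLinear (d i).vecMulLinear
  isHomogeneous : ∀ i, IsHomogeneousMatrix (stepDegree e i) (d i)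

namespace LinearResolution

attribute [instance] fintype unique

variable {e : ℕ} {I : Ideal (MvPolynomial σ R)} {α : Type*}

theorem d_succ_mul_d (A : LinearResolution e I) (i : ℕ) : A.d (i + 1) * A.d i = 0 := by
  classical
  refine Matrix.ext_of_single_vecMul fun a => ?_
  rw [← Matrix.vecMul_vecMul, Matrix.vecMul_zero]
  exact (A.exact_succ i).apply_apply_eq_zero (Pi.single a 1)

theorem exists_mul_d_succ_eq (A : LinearResolution e I) {i : ℕ}
    {W : Matrix α (A.ι (i + 1)) (MvPolynomial σ R)} (hW : W * A.d i = 0) :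
    ∃ U : Matrix α (A.ι (i + 2)) (MvPolynomial σ R), U * A.d (i + 1) = W :=
  exists_mul_eq_of_exact (A.exact_succ i) W fun a => congrFun hW a

theorem exists_mul_d_zero_eq (A : LinearResolution e I)
    {W : Matrix α (A.ι 0) (MvPolynomial σ R)} (hW : ∀ a, W a default ∈ I) :
    ∃ U : Matrix α (A.ι 1) (MvPolynomial σ R), U * A.d 0 = W :=
  exists_mul_eq_of_exact A.exact_zero W fun a => (Submodule.Quotient.mk_eq_zero I).2 (hW a)

theorem d_zero_apply_mem (A : LinearResolution e I) (b : A.ι 1) (c : A.ι 0) : A.d 0 b c ∈ I := by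
  classical
  rw [Subsingleton.elim c default]
  have hexact := A.exact_zero.apply_apply_eq_zero (Pi.single b 1)
  rw [Matrix.vecMulLinear_apply, Matrix.single_one_vecMul] at hexact
  exact (Submodule.Quotient.mk_eq_zero I).1 hexact

theorem mul_d_zero_apply_mem (A : LinearResolution e I)
    (U : Matrix α (A.ι 1) (MvPolynomial σ R)) (a : α) (c : A.ι 0) : (U * A.d 0) a c ∈ I :=
  sum_mem fun b _ => I.mul_mem_left _ (A.d_zero_apply_mem b c)

end LinearResolution

end LinearResolution

section RowMatrix

variable {S α β γ : Type*} [CommRing S]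

/-- The matrix of a linear map between free modules, whose rows are the images of the basis
vectors. It acts on row vectors, as the differentials of a `LinearResolution` do. -/
noncomputable def rowMatrix (f : (β →₀ S) →ₗ[S] (γ →₀ S)) : Matrix β γ S :=
  Matrix.of fun b c => f (Finsupp.single b 1) c

theorem rowMatrix_surjective [Finite γ] :
    Function.Surjective (rowMatrix : ((β →₀ S) →ₗ[S] (γ →₀ S)) → Matrix β γ S) := fun D =>
  ⟨Finsupp.linearCombination S fun b => (Finsupp.linearEquivFunOnFinite S S γ).symm (D b),
    by ext; simp [rowMatrix]⟩

theorem vecMulLinear_rowMatrix_comp_linearEquivFunOnFinite [Fintype β] [Finite γ]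
    (f : (β →₀ S) →ₗ[S] (γ →₀ S)) :
    (rowMatrix f).vecMulLinear ∘ₗ (Finsupp.linearEquivFunOnFinite S S β).toLinearMap =
      (Finsupp.linearEquivFunOnFinite S S γ).toLinearMap ∘ₗ f := by
  classical
  ext b c
  simp [rowMatrix]

theorem exact_vecMulLinear_rowMatrix_iff [Fintype α] [Fintype β] [Finite γ]
    {f : (α →₀ S) →ₗ[S] (β →₀ S)} {g : (β →₀ S) →ₗ[S] (γ →₀ S)} :
    Function.Exact (rowMatrix f).vecMulLinear (rowMatrix g).vecMulLinear ↔ Function.Exact f g :=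
  Function.Exact.iff_of_ladder_linearEquiv
    (vecMulLinear_rowMatrix_comp_linearEquivFunOnFinite f)
    (vecMulLinear_rowMatrix_comp_linearEquivFunOnFinite g)

theorem exact_vecMulLinear_rowMatrix_mkQ_iff [Fintype α] [Unique β] {I : Ideal S}
    {f : (α →₀ S) →ₗ[S] (β →₀ S)} {ε : (β →₀ S) →ₗ[S] (S ⧸ I)}
    (hε : ε (Finsupp.single default 1) = 1) :
    Function.Exact (rowMatrix f).vecMulLinear (I.mkQ ∘ₗ LinearMap.proj default) ↔
      Function.Exact f ε := by
  refine Function.Exact.iff_of_ladder_linearEquiv (e₃ := LinearEquiv.refl S (S ⧸ I))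
    (vecMulLinear_rowMatrix_comp_linearEquivFunOnFinite f) ?_
  ext b
  simp [Unique.eq_default b, hε]

end RowMatrix

theorem hasTwoLinearResolution_iff_nonempty_linearResolution {σ K : Type*}
    [Field K] {Δ : Set (Finset σ)} :
    HasTwoLinearResolution K Δ ↔ Nonempty (LinearResolution 2 (srIdeal K Δ)) := by
  constructor
  · rintro ⟨ι, _, _, d, ε, hε, -, hexact_zero, hexact_succ, hdeg_zero, hdeg_succ⟩
    have (i : ℕ) : Fintype (ι i) := Fintype.ofFinite _
    exact ⟨{
      ι := ι
      d := fun i => rowMatrix (d i)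
      exact_zero := (exact_vecMulLinear_rowMatrix_mkQ_iff hε).2 (LinearMap.exact_iff.2 hexact_zero)
      exact_succ := fun i =>
        exact_vecMulLinear_rowMatrix_iff.2 (LinearMap.exact_iff.2 (hexact_succ i))
      isHomogeneous := fun
        | 0 => hdeg_zero
        | i + 1 => hdeg_succ i }⟩
  · rintro ⟨A⟩
    choose d hd using fun i => rowMatrix_surjective (A.d i)
    have hexact (i : ℕ) : Function.Exact (d (i + 1)) (d i) := by
      rw [← exact_vecMulLinear_rowMatrix_iff, hd, hd]
      exact A.exact_succ i
    have hdegree (i : ℕ) : IsHomogeneousMatrix (stepDegree 2 i) (rowMatrix (d i)) :=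
      hd i ▸ A.isHomogeneous i
    let ε := (srIdeal K Δ).mkQ ∘ₗ Finsupp.lapply (R := MvPolynomial σ K) (default : A.ι 0)
    have hε : ε (Finsupp.single default 1) = 1 := by simp [ε]
    refine ⟨A.ι, inferInstance, A.unique, d, ε, hε, ?_, ?_,
      fun i => LinearMap.exact_iff.1 (hexact i), hdegree 0, fun i => hdegree (i + 1)⟩
    · exact (Submodule.mkQ_surjective _).comp fun r => ⟨Finsupp.single default r, by simp⟩
    · rw [← LinearMap.exact_iff, ← exact_vecMulLinear_rowMatrix_mkQ_iff hε, hd]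
      exact A.exact_zero

section ConeExactness

variable {S α₀ α₁ α₂ β₀ β₁ N : Type*} [CommRing S] [AddCommGroup N] [Module S N]
  [Fintype α₁] [Fintype α₂] [Fintype β₁]

theorem vecMul_fromBlocks_zero_neg_eq_zero_iff {D : Matrix α₁ α₀ S} {Φ : Matrix β₁ α₀ S}
    {δ : Matrix β₁ β₀ S} {w : α₁ ⊕ β₁ → S} :
    Matrix.vecMul w (Matrix.fromBlocks D 0 Φ (-δ)) = 0 ↔
      Matrix.vecMul w (Matrix.fromRows D Φ) = 0 ∧ Matrix.vecMul (w ∘ Sum.inr) δ = 0 := by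
  simp [Matrix.vecMul_fromBlocks, Matrix.vecMul_fromRows, Matrix.vecMul_neg, funext_iff]

theorem vecMul_fromRows_eq_zero_and_iff_of_exact [Fintype β₀]
    {D₀ : Matrix α₁ α₀ S} {D₁ : Matrix α₂ α₁ S} {Φ₀ : Matrix β₀ α₀ S} {Φ₁ : Matrix β₁ α₁ S}
    {δ : Matrix β₁ β₀ S} {η : (β₀ → S) →ₗ[S] N}
    (hΦ : Φ₁ * D₀ = δ * Φ₀) (hD : Function.Exact D₁.vecMulLinear D₀.vecMulLinear)
    (hδ : Function.Exact δ.vecMulLinear η) (w : α₁ ⊕ β₀ → S) :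
    (Matrix.vecMul w (Matrix.fromRows D₀ Φ₀) = 0 ∧ η (w ∘ Sum.inr) = 0) ↔
      ∃ u, Matrix.vecMul u (Matrix.fromBlocks D₁ 0 Φ₁ (-δ)) = w := by
  constructor
  · rintro ⟨hw, hη⟩
    obtain ⟨v, hv : Matrix.vecMul v δ = w ∘ Sum.inr⟩ := (hδ _).1 hη
    rw [Matrix.vecMul_fromRows] at hw
    have hcycle : Matrix.vecMul (w ∘ Sum.inl + Matrix.vecMul v Φ₁) D₀ = 0 := by
      rw [Matrix.add_vecMul, Matrix.vecMul_vecMul, hΦ, ← Matrix.vecMul_vecMul, hv, hw]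
    obtain ⟨u, hu : Matrix.vecMul u D₁ = _⟩ := (hD _).1 hcycle
    refine ⟨Sum.elim u (-v), ?_⟩
    simp only [Matrix.vecMul_fromBlocks, Sum.elim_comp_inl, Sum.elim_comp_inr, Matrix.vecMul_zero,
      zero_add, hu, Matrix.neg_vecMul, Matrix.vecMul_neg, neg_neg, hv, add_neg_cancel_right,
      Sum.elim_comp_inl_inr]
  · rintro ⟨u, rfl⟩
    have hDD : Matrix.vecMul (Matrix.vecMul (u ∘ Sum.inl) D₁) D₀ = 0 := hD.apply_apply_eq_zero _
    have hηδ : η (Matrix.vecMul (u ∘ Sum.inr) δ) = 0 := hδ.apply_apply_eq_zero _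
    simp only [Matrix.vecMul_fromBlocks, Matrix.vecMul_fromRows, Sum.elim_comp_inl,
      Sum.elim_comp_inr, Matrix.vecMul_zero, zero_add, Matrix.add_vecMul, Matrix.vecMul_neg,
      Matrix.neg_vecMul, map_neg, hDD, hηδ, neg_zero, and_true]
    rw [Matrix.vecMul_vecMul, Matrix.vecMul_vecMul, hΦ, add_neg_cancel]

variable [Unique α₀] [Fintype β₀] [Unique β₀] {D : Matrix α₁ α₀ S} {I J : Ideal S} {m : S}

theorem vecMul_fromRows_of_const_default (w : α₁ ⊕ β₀ → S) :
    Matrix.vecMul w (Matrix.fromRows D (Matrix.of fun _ _ => m)) default =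
      Matrix.vecMul (w ∘ Sum.inl) D default + w (Sum.inr default) * m := by
  simp [Matrix.vecMul, dotProduct]

theorem exact_vecMulLinear_fromRows_of_const
    (hD : Function.Exact D.vecMulLinear (I.mkQ ∘ₗ LinearMap.proj default)) :
    Function.Exact (Matrix.fromRows D (Matrix.of fun (_ : β₀) _ => m)).vecMulLinear
      ((I ⊔ Ideal.span {m}).mkQ ∘ₗ LinearMap.proj default) := by
  intro r
  change Submodule.Quotient.mk (r default) = 0 ↔ ∃ w, Matrix.vecMul w _ = r
  rw [Submodule.Quotient.mk_eq_zero]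
  constructor
  · intro hr
    obtain ⟨y, hy, z, hz, hyz⟩ := Submodule.mem_sup.1 hr
    obtain ⟨c, rfl⟩ := Ideal.mem_span_singleton'.1 hz
    obtain ⟨w, hw : Matrix.vecMul w D = fun _ => y⟩ :=
      (hD fun _ => y).1 ((Submodule.Quotient.mk_eq_zero I).2 hy)
    refine ⟨Sum.elim w fun _ => c, funext <| Unique.forall_iff.2 ?_⟩
    rw [vecMul_fromRows_of_const_default, Sum.elim_comp_inl, hw, Sum.elim_inr, hyz]
  · rintro ⟨w, rfl⟩
    rw [vecMul_fromRows_of_const_default]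
    refine add_mem (Ideal.mem_sup_left ?_) (Ideal.mem_sup_right ?_)
    · exact (Submodule.Quotient.mk_eq_zero I).1 (hD.apply_apply_eq_zero _)
    · exact Ideal.mul_mem_left _ _ (Ideal.mem_span_singleton_self m)

theorem mem_of_vecMul_fromRows_of_const_eq_zero
    (hD : Function.Exact D.vecMulLinear (I.mkQ ∘ₗ LinearMap.proj default))
    (hmJ : ∀ r, r * m ∈ I → r ∈ J) {w : α₁ ⊕ β₀ → S}
    (hw : Matrix.vecMul w (Matrix.fromRows D (Matrix.of fun _ _ => m)) = 0) :
    w (Sum.inr default) ∈ J := by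
  have hsum := congrFun hw default
  rw [vecMul_fromRows_of_const_default] at hsum
  refine hmJ _ ?_
  rw [eq_neg_of_add_eq_zero_right hsum]
  exact neg_mem ((Submodule.Quotient.mk_eq_zero I).1 (hD.apply_apply_eq_zero _))

end ConeExactness

namespace LinearResolution

variable {σ R : Type*} [CommRing R] {e : ℕ} {I J : Ideal (MvPolynomial σ R)}
  {m : MvPolynomial σ R}

theorem exists_comparison_succ (A : LinearResolution e I) (B : LinearResolution 1 J) {i : ℕ}
    {Φ : Matrix (B.ι i) (A.ι i) (MvPolynomial σ R)} (hΦ : IsHomogeneousMatrix (stepDegree e i) Φ)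
    (hlift : ∃ Ψ : Matrix (B.ι (i + 1)) (A.ι (i + 1)) (MvPolynomial σ R), Ψ * A.d i = B.d i * Φ) :
    ∃ Ψ : Matrix (B.ι (i + 1)) (A.ι (i + 1)) (MvPolynomial σ R),
      IsHomogeneousMatrix 1 Ψ ∧ Ψ * A.d i = B.d i * Φ := by
  have hBd : IsHomogeneousMatrix 1 (B.d i) := by simpa only [stepDegree_one] using B.isHomogeneous i
  exact (A.isHomogeneous i).exists_isHomogeneousMatrix_mul_eq (hBd.mul hΦ) hlift

theorem exists_comparison (A : LinearResolution e I) (B : LinearResolution 1 J)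
    (hm : m.IsHomogeneous e) (hJm : ∀ r ∈ J, r * m ∈ I) :
    ∃ Φ : ∀ i, Matrix (B.ι i) (A.ι i) (MvPolynomial σ R),
      Φ 0 = Matrix.of (fun _ _ => m) ∧ (∀ i, Φ (i + 1) * A.d i = B.d i * Φ i) ∧
        ∀ i, IsHomogeneousMatrix (stepDegree e i) (Φ i) := by
  let Extends (i : ℕ) (Φ : Matrix (B.ι i) (A.ι i) (MvPolynomial σ R)) : Prop :=
    IsHomogeneousMatrix (stepDegree e i) Φ ∧
      ∃ Ψ : Matrix (B.ι (i + 1)) (A.ι (i + 1)) (MvPolynomial σ R), Ψ * A.d i = B.d i * Φ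
  have extends_zero : Extends 0 (Matrix.of fun _ _ => m) := by
    refine ⟨fun _ _ => hm, A.exists_mul_d_zero_eq fun b => ?_⟩
    simpa [Matrix.mul_apply] using hJm _ (B.d_zero_apply_mem b default)
  have extends_succ (i : ℕ) (Φ : {Φ // Extends i Φ}) :
      ∃ Ψ : {Ψ // Extends (i + 1) Ψ}, Ψ.1 * A.d i = B.d i * Φ.1 := by
    obtain ⟨Ψ, hΨ, hcomm⟩ := A.exists_comparison_succ B Φ.2.1 Φ.2.2
    refine ⟨⟨Ψ, hΨ, A.exists_mul_d_succ_eq ?_⟩, hcomm⟩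
    rw [Matrix.mul_assoc, hcomm, ← Matrix.mul_assoc, B.d_succ_mul_d, Matrix.zero_mul]
  choose next hnext using extends_succ
  let Φ (i : ℕ) : {Φ // Extends i Φ} := Nat.rec ⟨_, extends_zero⟩ next i
  exact ⟨fun i => (Φ i).1, rfl, fun i => hnext i (Φ i), fun i => (Φ i).2.1⟩

section Cone

variable (A : LinearResolution e I) (B : LinearResolution 1 J)

/-- The bases of the mapping cone of a comparison map `B → A`, where `B` is shifted by one. -/
def coneIndex : ℕ → Type
  | 0 => A.ι 0
  | i + 1 => A.ι (i + 1) ⊕ B.ι i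

instance : ∀ i, Fintype (A.coneIndex B i)
  | 0 => A.fintype 0
  | i + 1 => inferInstanceAs (Fintype (A.ι (i + 1) ⊕ B.ι i))

instance : Unique (A.coneIndex B 0) := A.unique

/-- The differentials of the mapping cone of a comparison map `Φ : B → A`. -/
noncomputable def coneDifferential (Φ : ∀ i, Matrix (B.ι i) (A.ι i) (MvPolynomial σ R)) :
    ∀ i, Matrix (A.coneIndex B (i + 1)) (A.coneIndex B i) (MvPolynomial σ R)
  | 0 => Matrix.fromRows (A.d 0) (Φ 0)
  | i + 1 => Matrix.fromBlocks (A.d (i + 1)) 0 (Φ (i + 1)) (-B.d i)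

variable {A B} {Φ : ∀ i, Matrix (B.ι i) (A.ι i) (MvPolynomial σ R)}

theorem isHomogeneousMatrix_coneDifferential
    (hΦ : ∀ i, IsHomogeneousMatrix (stepDegree e i) (Φ i)) :
    ∀ i, IsHomogeneousMatrix (stepDegree e i) (A.coneDifferential B Φ i)
  | 0 => fun
    | .inl a => A.isHomogeneous 0 a
    | .inr b => hΦ 0 b
  | i + 1 => fun
    | .inl a, .inl c => A.isHomogeneous (i + 1) a c
    | .inl _, .inr _ => isHomogeneous_zero σ R 1
    | .inr b, .inl c => hΦ (i + 1) b c
    | .inr b, .inr c => (stepDegree_one i ▸ B.isHomogeneous i b c).neg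

theorem exact_coneDifferential_zero (hΦ : Φ 0 = Matrix.of fun _ _ => m) :
    Function.Exact (A.coneDifferential B Φ 0).vecMulLinear
      ((I ⊔ Ideal.span {m}).mkQ ∘ₗ LinearMap.proj default) := by
  rw [coneDifferential, hΦ]
  exact exact_vecMulLinear_fromRows_of_const A.exact_zero

theorem exact_coneDifferential_one (hΦ : Φ 0 = Matrix.of fun _ _ => m)
    (hcomm : Φ 1 * A.d 0 = B.d 0 * Φ 0) (hmJ : ∀ r, r * m ∈ I → r ∈ J) :
    Function.Exact (A.coneDifferential B Φ 1).vecMulLinear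
      (A.coneDifferential B Φ 0).vecMulLinear := by
  intro w
  refine Iff.trans (and_iff_left_of_imp fun hw => ?_).symm
    (vecMul_fromRows_eq_zero_and_iff_of_exact hcomm (A.exact_succ 0) B.exact_zero w)
  change Matrix.vecMul w (Matrix.fromRows (A.d 0) (Φ 0)) = 0 at hw
  rw [hΦ] at hw
  exact (Submodule.Quotient.mk_eq_zero J).2
    (mem_of_vecMul_fromRows_of_const_eq_zero A.exact_zero hmJ hw)

theorem exact_coneDifferential_add_two {i : ℕ}
    (hcomm : Φ (i + 2) * A.d (i + 1) = B.d (i + 1) * Φ (i + 1)) :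
    Function.Exact (A.coneDifferential B Φ (i + 2)).vecMulLinear
      (A.coneDifferential B Φ (i + 1)).vecMulLinear := fun w =>
  vecMul_fromBlocks_zero_neg_eq_zero_iff.trans
    (vecMul_fromRows_eq_zero_and_iff_of_exact hcomm (A.exact_succ (i + 1)) (B.exact_succ i) w)

end Cone

theorem nonempty_sup_span_singleton (A : LinearResolution e I) (B : LinearResolution 1 J)
    (hm : m.IsHomogeneous e) (hcolon : ∀ r, r * m ∈ I ↔ r ∈ J) :
    Nonempty (LinearResolution e (I ⊔ Ideal.span {m})) := by
  obtain ⟨Φ, hΦ_zero, hcomm, hdegree⟩ := exists_comparison A B hm fun r => (hcolon r).2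
  exact ⟨{
    ι := A.coneIndex B
    d := A.coneDifferential B Φ
    exact_zero := exact_coneDifferential_zero hΦ_zero
    exact_succ := fun
      | 0 => exact_coneDifferential_one hΦ_zero (hcomm 0) fun r => (hcolon r).1
      | i + 1 => exact_coneDifferential_add_two (hcomm (i + 1))
    isHomogeneous := isHomogeneousMatrix_coneDifferential hdegree }⟩

/-- The bases of the resolution of the zero ideal, concentrated in degree `0`. -/
def botIndex : ℕ → Type
  | 0 => Unit
  | _ + 1 => Empty

instance : ∀ i, Fintype (botIndex i)
  | 0 => inferInstanceAs (Fintype Unit)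
  | _ + 1 => inferInstanceAs (Fintype Empty)

instance : Unique (botIndex 0) := inferInstanceAs (Unique Unit)

instance (i : ℕ) : IsEmpty (botIndex (i + 1)) := inferInstanceAs (IsEmpty Empty)

theorem nonempty_bot (e : ℕ) :
    Nonempty (LinearResolution e (⊥ : Ideal (MvPolynomial σ R))) :=
  ⟨{ ι := botIndex
     d := fun _ => 0
     exact_zero := fun r => by
       simpa [funext_iff, Unique.forall_iff, Ideal.Quotient.eq_zero_iff_mem] using eq_comm
     exact_succ := fun i w => by simp [Subsingleton.elim w 0]
     isHomogeneous := fun _ a => isEmptyElim a }⟩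

theorem nonempty_span_X_image {S : Set σ} (hS : S.Finite) :
    Nonempty (LinearResolution 1 (Ideal.span (X '' S : Set (MvPolynomial σ R)))) := by
  induction S, hS using Set.Finite.induction_on with
  | empty => simpa using nonempty_bot 1
  | @insert v S hv _ ih =>
    obtain ⟨A⟩ := ih
    rw [Set.image_insert_eq, Set.insert_eq, Set.union_comm, Ideal.span_union]
    refine A.nonempty_sup_span_singleton A (isHomogeneous_X R v) fun r => ?_
    simp only [mem_ideal_span_X_image, support_mul_X, Finset.mem_map, forall_exists_index, and_imp,
      forall_apply_eq_imp_iff₂, addRightEmbedding_apply, Finsupp.coe_add, Pi.add_apply]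
    refine forall₂_congr fun m _ => exists_congr fun i => and_congr_right fun hi => ?_
    rw [Finsupp.single_eq_of_ne (ne_of_mem_of_not_mem hi hv), add_zero]

end LinearResolution

section SquarefreeMonomialIdeal

variable {σ R : Type*} [CommRing R]

theorem sum_single_one_le_iff {S : Finset σ} {m : σ →₀ ℕ} :
    ∑ v ∈ S, Finsupp.single v 1 ≤ m ↔ S ⊆ m.support := by
  classical
  simp only [Finsupp.le_def, Finsupp.finsetSum_apply, Finsupp.single_apply, Finset.sum_ite_eq',
    Finset.subset_iff, Finsupp.mem_support_iff, ← Nat.one_le_iff_ne_zero]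
  refine forall_congr' fun v => ?_
  split_ifs with hv <;> simp [hv]

theorem mem_span_prod_X_image_iff {𝒮 : Set (Finset σ)} {r : MvPolynomial σ R} :
    r ∈ Ideal.span ((fun S : Finset σ => ∏ v ∈ S, (X v : MvPolynomial σ R)) '' 𝒮) ↔
      ∀ m ∈ r.support, ∃ S ∈ 𝒮, S ⊆ m.support := by
  have himage : (fun S : Finset σ => ∏ v ∈ S, (X v : MvPolynomial σ R)) '' 𝒮 =
      (fun m => monomial m 1) '' ((fun S => ∑ v ∈ S, Finsupp.single v 1) '' 𝒮) := by
    simp only [Set.image_image, monomial_sum_one, X]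
  simp only [himage, mem_ideal_span_monomial_image, Set.exists_mem_image, sum_single_one_le_iff]

theorem mem_srIdeal_iff {K : Type*} [Field K] {Δ : Set (Finset σ)} (hΔ : IsLowerSet Δ)
    {r : MvPolynomial σ K} : r ∈ srIdeal K Δ ↔ ∀ m ∈ r.support, m.support ∉ Δ := by
  rw [srIdeal, mem_span_prod_X_image_iff]
  exact forall₂_congr fun m _ =>
    ⟨fun ⟨_, hS, hSm⟩ hm => hS (hΔ hSm hm), fun hm => ⟨_, hm, subset_rfl⟩⟩

end SquarefreeMonomialIdeal

section EdgeIdeal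

variable {σ K : Type*} [Field K] {H : SimpleGraph σ} {x p : σ}

/-- The edge ideal of a graph, i.e. the Stanley-Reisner ideal of its independence complex. -/
noncomputable def edgeIdeal (K : Type*) [Field K] (H : SimpleGraph σ) :
    Ideal (MvPolynomial σ K) :=
  srIdeal K {S | H.IsIndepSet ↑S}

theorem mem_edgeIdeal_iff {r : MvPolynomial σ K} :
    r ∈ edgeIdeal K H ↔ ∀ m ∈ r.support, ¬H.IsIndepSet ↑m.support :=
  mem_srIdeal_iff fun _ _ hTS (hS : H.IsIndepSet _) => hS.mono (Finset.coe_subset.2 hTS)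

theorem edgeIdeal_bot : edgeIdeal K (⊥ : SimpleGraph σ) = ⊥ := by
  simp [edgeIdeal, srIdeal, SimpleGraph.isIndepSet_iff, Set.Pairwise]

theorem isIndepSet_sup_edge_iff (hxp : x ≠ p) {s : Set σ} :
    (H ⊔ SimpleGraph.edge x p).IsIndepSet s ↔ H.IsIndepSet s ∧ ¬(x ∈ s ∧ p ∈ s) := by
  simp only [SimpleGraph.isIndepSet_iff, Set.Pairwise, SimpleGraph.sup_adj, SimpleGraph.edge_adj]
  grind

theorem edgeIdeal_sup_edge (hxp : x ≠ p) :
    edgeIdeal K (H ⊔ SimpleGraph.edge x p) = edgeIdeal K H ⊔ Ideal.span {X x * X p} := by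
  classical
  have hgenerator : {(X x * X p : MvPolynomial σ K)} =
      (fun S : Finset σ => ∏ v ∈ S, X v) '' {{x, p}} := by
    rw [Set.image_singleton, Finset.prod_pair hxp]
  ext r
  rw [mem_edgeIdeal_iff, edgeIdeal, srIdeal, hgenerator, ← Ideal.span_union, ← Set.image_union,
    mem_span_prod_X_image_iff]
  refine forall₂_congr fun m _ => ?_
  rw [isIndepSet_sup_edge_iff hxp, not_and_not_right]
  constructor
  · intro hm
    by_cases hH : H.IsIndepSet ↑m.support
    · obtain ⟨hx, hp⟩ := hm hH
      exact ⟨{x, p}, Or.inr rfl, Finset.insert_subset hx (Finset.singleton_subset_iff.2 hp)⟩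
    · exact ⟨m.support, Or.inl hH, subset_rfl⟩
  · rintro ⟨S, hS | rfl, hSm⟩ hH
    · exact absurd (hH.mono (Finset.coe_subset.2 hSm)) hS
    · exact ⟨hSm (by simp), hSm (by simp)⟩

theorem not_isIndepSet_insert_insert_iff (hxp : ¬H.Adj x p)
    (hcover : H.IsVertexCover (H.neighborSet x ∪ H.neighborSet p)) {s : Set σ} :
    ¬H.IsIndepSet (insert x (insert p s)) ↔ ∃ v ∈ H.neighborSet x ∪ H.neighborSet p, v ∈ s := by
  simp only [SimpleGraph.isIndepSet_iff, Set.Pairwise, SimpleGraph.IsVertexCover,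
    Set.mem_union, SimpleGraph.mem_neighborSet] at hcover ⊢
  constructor
  · grind [H.adj_comm]
  · rintro ⟨v, hv | hv, hvs⟩ hindep
    · exact hindep (by simp) (by simp [hvs]) hv.ne hv
    · exact hindep (by simp) (by simp [hvs]) hv.ne hv

theorem mul_X_mul_X_mem_edgeIdeal_iff (hxp : ¬H.Adj x p)
    (hcover : H.IsVertexCover (H.neighborSet x ∪ H.neighborSet p)) (r : MvPolynomial σ K) :
    r * (X x * X p) ∈ edgeIdeal K H ↔
      r ∈ Ideal.span (X '' (H.neighborSet x ∪ H.neighborSet p)) := by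
  have hsupport (m : σ →₀ ℕ) :
      ((m + Finsupp.single x 1 + Finsupp.single p 1).support : Set σ) =
        insert x (insert p ↑m.support) := by
    classical
    ext v
    simp only [Finset.mem_coe, Finsupp.mem_support_iff, Finsupp.coe_add, Pi.add_apply,
      Finsupp.single_apply, Set.mem_insert_iff]
    grind
  simp only [mem_edgeIdeal_iff, mem_ideal_span_X_image, ← mul_assoc, support_mul_X,
    Finset.forall_mem_map, addRightEmbedding_apply, hsupport,
    not_isIndepSet_insert_insert_iff hxp hcover, Finset.mem_coe, Finsupp.mem_support_iff]

theorem nonempty_linearResolution_edgeIdeal_sup_edge [Finite σ] (hne : x ≠ p)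
    (hxp : ¬H.Adj x p) (hcover : H.IsVertexCover (H.neighborSet x ∪ H.neighborSet p))
    (hH : Nonempty (LinearResolution 2 (edgeIdeal K H))) :
    Nonempty (LinearResolution 2 (edgeIdeal K (H ⊔ SimpleGraph.edge x p))) := by
  obtain ⟨A⟩ := hH
  obtain ⟨B⟩ := LinearResolution.nonempty_span_X_image (R := K)
    (H.neighborSet x ∪ H.neighborSet p).toFinite
  rw [edgeIdeal_sup_edge hne]
  exact A.nonempty_sup_span_singleton B ((isHomogeneous_X K x).mul (isHomogeneous_X K p))
    (mul_X_mul_X_mem_edgeIdeal_iff hxp hcover)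

end EdgeIdeal

section StarGraphOn

variable {σ K : Type*} [Field K] {H : SimpleGraph σ} {x : σ}

/-- The star with centre `x` and leaves `Q`. -/
def starGraphOn (x : σ) (Q : Finset σ) : SimpleGraph σ :=
  Q.sup (SimpleGraph.edge x)

theorem starGraphOn_adj {Q : Finset σ} (hx : x ∉ Q) {a b : σ} :
    (starGraphOn x Q).Adj a b ↔ a = x ∧ b ∈ Q ∨ b = x ∧ a ∈ Q := by
  simp only [starGraphOn, Finset.sup_eq_iSup, SimpleGraph.iSup_adj, SimpleGraph.edge_adj]
  grind

theorem nonempty_linearResolution_edgeIdeal_sup_starGraphOn [Finite σ] {Q : Finset σ} (hxQ : x ∉ Q)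
    (hadj : ∀ p ∈ Q, ¬H.Adj x p)
    (hcover : ∀ p ∈ Q, H.IsVertexCover (H.neighborSet x ∪ H.neighborSet p))
    (hH : Nonempty (LinearResolution 2 (edgeIdeal K H))) :
    Nonempty (LinearResolution 2 (edgeIdeal K (H ⊔ starGraphOn x Q))) := by
  classical
  induction Q using Finset.induction_on with
  | empty => simpa [starGraphOn] using hH
  | insert p Q hp ih =>
    simp only [Finset.mem_insert, not_or, forall_eq_or_imp] at hxQ hadj hcover
    have hstar : H ⊔ starGraphOn x (insert p Q) = H ⊔ starGraphOn x Q ⊔ SimpleGraph.edge x p := by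
      rw [starGraphOn, Finset.sup_insert, sup_comm (SimpleGraph.edge x p), ← sup_assoc, starGraphOn]
    rw [hstar]
    refine nonempty_linearResolution_edgeIdeal_sup_edge hxQ.1 ?_ ?_ (ih hxQ.2 hadj.2 hcover.2)
    · rw [SimpleGraph.sup_adj, starGraphOn_adj hxQ.2]
      grind
    · have hcover_p := @hcover.1
      simp only [SimpleGraph.IsVertexCover, Set.mem_union, SimpleGraph.mem_neighborSet,
        SimpleGraph.sup_adj, starGraphOn_adj hxQ.2] at hcover_p ⊢
      grind

end StarGraphOn

section GeneralizedTree

variable {K : Type*} [Field K] {W F : Finset V} {Δ : Set (Finset V)} {H : SimpleGraph V} {x : V}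

/-- The graph on `W` whose edges are the two-element nonfaces of `Δ`; its edge ideal is the
degree-two part of the Stanley-Reisner ideal of `Δ`. -/
def nonfaceGraph (W : Finset V) (Δ : Set (Finset V)) : SimpleGraph V where
  Adj a b := a ≠ b ∧ a ∈ W ∧ b ∈ W ∧ {a, b} ∉ Δ
  symm := ⟨fun a b ⟨hne, ha, hb, hab⟩ => ⟨hne.symm, hb, ha, Finset.pair_comm a b ▸ hab⟩⟩

theorem nonfaceGraph_simplex : nonfaceGraph W {S | S ⊆ W} = ⊥ := by
  ext a b
  simp only [nonfaceGraph, Set.mem_ofPred_eq, Finset.insert_subset_iff,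
    Finset.singleton_subset_iff, SimpleGraph.bot_adj]
  grind

theorem IsGeneralizedTree.isLowerSet (hΔ : IsGeneralizedTree W Δ) : IsLowerSet Δ := by
  induction hΔ with
  | simplex W => exact isLowerSet_Iic W
  | cone _ _ F x _ _ _ ih => exact ih.union (isLowerSet_Iic (insert x F))

theorem IsGeneralizedTree.subset (hΔ : IsGeneralizedTree W Δ) : ∀ S ∈ Δ, S ⊆ W := by
  induction hΔ with
  | simplex => exact fun S hS => hS
  | cone W Δ F x _ hF _ ih =>
    rintro S (hS | hS)
    · exact (ih S hS).trans (Finset.subset_insert x W)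
    · exact hS.trans (Finset.insert_subset_insert x (ih F hF))

theorem nonfaceGraph_cone (hΔ : IsGeneralizedTree W Δ) (hF : F ∈ Δ) (hx : x ∉ W) :
    nonfaceGraph (insert x W) (Δ ∪ {S | S ⊆ insert x F}) =
      starGraphOn x (W \ F) ⊔ nonfaceGraph W Δ := by
  have hpairF {a b : V} (ha : a ∈ F) (hb : b ∈ F) : {a, b} ∈ Δ :=
    hΔ.isLowerSet (Finset.insert_subset ha (Finset.singleton_subset_iff.2 hb)) hF
  have hpairW {a b : V} (hab : {a, b} ∈ Δ) : a ∈ W ∧ b ∈ W := by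
    simpa [Finset.insert_subset_iff] using hΔ.subset _ hab
  have hFW := hΔ.subset F hF
  ext a b
  rw [SimpleGraph.sup_adj, starGraphOn_adj (by simp [hx])]
  simp only [nonfaceGraph, Set.mem_union, Set.mem_ofPred_eq, Finset.mem_insert,
    Finset.mem_sdiff, Finset.insert_subset_iff, Finset.singleton_subset_iff]
  grind

theorem isIndepSet_nonfaceGraph_of_mem (hΔ : IsLowerSet Δ) {S : Finset V} (hS : S ∈ Δ) :
    (nonfaceGraph W Δ).IsIndepSet ↑S :=
  fun _ ha _ hb _ hab =>
    hab.2.2.2 (hΔ (Finset.insert_subset ha (Finset.singleton_subset_iff.2 hb)) hS)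

theorem IsGeneralizedTree.mem_of_isIndepSet_nonfaceGraph (hΔ : IsGeneralizedTree W Δ)
    {S : Finset V} (hSW : S ⊆ W) (hS : (nonfaceGraph W Δ).IsIndepSet ↑S) : S ∈ Δ := by
  induction hΔ with
  | simplex => exact hSW
  | cone W Δ F x hΔ hF hx ih =>
    rw [nonfaceGraph_cone hΔ hF hx] at hS
    by_cases hxS : x ∈ S
    · right
      intro s hs
      by_contra hsF
      refine hS hxS hs (by grind) (Or.inl ((starGraphOn_adj (by simp [hx])).2 (Or.inl ⟨rfl, ?_⟩)))
      grind
    · exact Or.inl (ih (by grind) (hS.mono' fun _ _ hab h => hab (Or.inr h)))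

theorem IsGeneralizedTree.nonempty_linearResolution_edgeIdeal_sup_nonfaceGraph [Finite V]
    (hΔ : IsGeneralizedTree W Δ) (hindep : H.IsIndepSet ↑W)
    (hcover : ∀ a b, (nonfaceGraph W Δ).Adj a b →
      H.IsVertexCover (H.neighborSet a ∪ H.neighborSet b))
    (hH : Nonempty (LinearResolution 2 (edgeIdeal K H))) :
    Nonempty (LinearResolution 2 (edgeIdeal K (H ⊔ nonfaceGraph W Δ))) := by
  induction hΔ generalizing H with
  | simplex => rwa [nonfaceGraph_simplex, sup_bot_eq]
  | cone W Δ F x hΔ hF hx ih =>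
    have hxQ : x ∉ W \ F := by simp [hx]
    simp only [nonfaceGraph_cone hΔ hF hx, SimpleGraph.sup_adj, starGraphOn_adj hxQ] at hcover
    simp only [SimpleGraph.isIndepSet_iff, Set.Pairwise, Finset.coe_insert, Set.mem_insert_iff,
      Finset.mem_coe] at hindep
    rw [nonfaceGraph_cone hΔ hF hx, ← sup_assoc]
    apply ih
    · simp only [SimpleGraph.isIndepSet_iff, Set.Pairwise, SimpleGraph.sup_adj, starGraphOn_adj hxQ,
        Finset.mem_coe]
      grind
    · intro a b hab
      have hab_cover := @(hcover a b (Or.inr hab))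
      have hF_face (ha : a ∈ F) (hb : b ∈ F) : False := hab.2.2.2
        (hΔ.isLowerSet (Finset.insert_subset ha (Finset.singleton_subset_iff.2 hb)) hF)
      obtain ⟨-, ha, hb, -⟩ := hab
      simp only [SimpleGraph.IsVertexCover, Set.mem_union, SimpleGraph.mem_neighborSet,
        SimpleGraph.sup_adj, starGraphOn_adj hxQ, Finset.mem_sdiff] at hab_cover ⊢
      grind
    · refine nonempty_linearResolution_edgeIdeal_sup_starGraphOn hxQ (fun p hp => ?_)
        (fun p hp => hcover x p (Or.inl (Or.inl ⟨rfl, hp⟩))) hH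
      grind

theorem IsGeneralizedTree.nonempty_linearResolution_srIdeal [Fintype V]
    (hΔ : IsGeneralizedTree Finset.univ Δ) : Nonempty (LinearResolution 2 (srIdeal K Δ)) := by
  have hΔ_eq : Δ = {S : Finset V | (nonfaceGraph Finset.univ Δ).IsIndepSet ↑S} :=
    Set.ext fun S => ⟨isIndepSet_nonfaceGraph_of_mem hΔ.isLowerSet,
      hΔ.mem_of_isIndepSet_nonfaceGraph (Finset.subset_univ S)⟩
  have hbot : Nonempty (LinearResolution 2 (edgeIdeal K (⊥ : SimpleGraph V))) :=
    edgeIdeal_bot (σ := V) (K := K) ▸ LinearResolution.nonempty_bot 2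
  have hres := hΔ.nonempty_linearResolution_edgeIdeal_sup_nonfaceGraph
    (by simp [SimpleGraph.isIndepSet_iff, Set.Pairwise]) (by simp [SimpleGraph.IsVertexCover]) hbot
  rw [bot_sup_eq, edgeIdeal, ← hΔ_eq] at hres
  exact hres

end GeneralizedTree

section DivX

variable {σ R : Type*} [CommRing R]

/-- Division by the variable `X v`, discarding the monomials that are not divisible by it. -/
noncomputable def divX (v : σ) : MvPolynomial σ R →ₗ[R] MvPolynomial σ R where
  toFun p := p.divMonomial (Finsupp.single v 1)
  map_add' p q := add_divMonomial p q _
  map_smul' a p := by ext; simp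

theorem coeff_divX (v : σ) (p : MvPolynomial σ R) (m : σ →₀ ℕ) :
    coeff m (divX v p) = coeff (Finsupp.single v 1 + m) p :=
  coeff_divMonomial _ _ _

theorem divX_C_mul (v : σ) (a : R) (p : MvPolynomial σ R) : divX v (C a * p) = C a * divX v p := by
  rw [C_mul', map_smul, C_mul']

theorem divX_X_mul_self (v : σ) (p : MvPolynomial σ R) : divX v (X v * p) = p :=
  X_mul_divMonomial v p

theorem divX_X_mul_of_ne {u v : σ} (huv : u ≠ v) (p : MvPolynomial σ R) :
    divX v (X u * p) = X u * divX v p := by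
  classical
  ext m
  have hsupport : u ∈ (Finsupp.single v 1 + m).support ↔ u ∈ m.support := by
    simp [huv.symm]
  simp only [coeff_divX, coeff_X_mul', hsupport]
  split_ifs with hu
  · rw [add_tsub_assoc_of_le]
    exact Finsupp.single_le_iff.2 (Nat.one_le_iff_ne_zero.2 (Finsupp.mem_support_iff.1 hu))
  · rfl

theorem coeff_X_mul_divX [DecidableEq σ] (v : σ) (p : MvPolynomial σ R) (m : σ →₀ ℕ) :
    coeff m (X v * divX v p) = if v ∈ m.support then coeff m p else 0 := by
  rw [coeff_X_mul']
  split_ifs with hv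
  · rw [coeff_divX, add_tsub_cancel_of_le]
    exact Finsupp.single_le_iff.2 (Nat.one_le_iff_ne_zero.2 (Finsupp.mem_support_iff.1 hv))
  · rfl

end DivX

section Koszul

/-- A choice of signs for the Koszul complex on the variables `σ`: `sign v T` is the sign of
the basis element `e_{T ∪ {v}}` in the product `e_v ∧ e_T`. -/
structure KoszulSign (σ R : Type*) [DecidableEq σ] [CommRing R] where
  sign : σ → Finset σ → R
  sign_mul_self : ∀ v T, sign v T * sign v T = 1
  anticomm : ∀ {u v T}, u ∉ T → v ∉ T → u ≠ v →
    sign u (insert v T) * sign v T = -(sign v (insert u T) * sign u T)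

variable {σ R κ : Type*} [DecidableEq σ] [CommRing R]

theorem nonempty_koszulSign [Countable σ] : Nonempty (KoszulSign σ R) := by
  obtain ⟨o, ho⟩ := exists_injective_nat σ
  have hcard_insert {u v : σ} {T : Finset σ} (hv : v ∉ T) :
      (Finset.card {t ∈ insert v T | o t < o u}) =
        Finset.card {t ∈ T | o t < o u} + if o v < o u then 1 else 0 := by
    rw [Finset.filter_insert]
    split_ifs with hvu
    · rw [Finset.card_insert_of_notMem (by simp [hv])]
    · rfl
  refine ⟨fun v T => (-1) ^ Finset.card {t ∈ T | o t < o v}, fun v T => ?_, fun hu hv huv => ?_⟩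
  · rw [← mul_pow, neg_one_mul, neg_neg, one_pow]
  · rw [hcard_insert hu, hcard_insert hv]
    rcases (ho.ne huv).lt_or_gt with h | h <;> simp only [h, h.not_gt, if_true, if_false] <;> ring

namespace KoszulSign

variable (s : KoszulSign σ R)

theorem sign_insert_mul_sign_insert {u v : σ} {T : Finset σ}
    (hu : u ∉ T) (hv : v ∉ T) (huv : u ≠ v) :
    s.sign u (insert v T) * s.sign v (insert u T) = -(s.sign u T * s.sign v T) := by
  linear_combination s.sign v T * s.sign v (insert u T) * s.anticomm hu hv huv
    - s.sign u (insert v T) * s.sign v (insert u T) * s.sign_mul_self v T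
    - s.sign v T * s.sign u T * s.sign_mul_self v (insert u T)

/-- The contracting homotopy of the Koszul complex in the direction of the variable `v`. -/
noncomputable def homotopy (v : σ) (w : Matrix (Finset σ) κ (MvPolynomial σ R)) :
    Matrix (Finset σ) κ (MvPolynomial σ R) :=
  Matrix.of fun T c => if v ∈ T then C (s.sign v (T.erase v)) * divX v (w (T.erase v) c) else 0

theorem homotopy_insert_apply {v : σ} {T : Finset σ} (hv : v ∉ T)
    (w : Matrix (Finset σ) κ (MvPolynomial σ R)) (c : κ) :
    s.homotopy v w (insert v T) c = C (s.sign v T) * divX v (w T c) := by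
  simp [homotopy, hv]

variable [Fintype σ]

/-- The Koszul differential on the variables, as a matrix acting on columns: the column
`w : Finset σ → _` stands for `∑ T, w T • e_T`. -/
noncomputable def koszulMatrix : Matrix (Finset σ) (Finset σ) (MvPolynomial σ R) :=
  Matrix.of fun T S => ∑ v ∈ Tᶜ, if insert v T = S then C (s.sign v T) * X v else 0

theorem isHomogeneousMatrix_koszulMatrix : IsHomogeneousMatrix 1 s.koszulMatrix := by
  refine fun T S => IsHomogeneous.sum _ _ _ fun v _ => ?_
  split_ifs
  · exact (isHomogeneous_X R v).C_mul _
  · exact isHomogeneous_zero _ _ _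

theorem koszulMatrix_mul_apply (w : Matrix (Finset σ) κ (MvPolynomial σ R)) (T : Finset σ) (c : κ) :
    (s.koszulMatrix * w) T c = ∑ v ∈ Tᶜ, C (s.sign v T) * X v * w (insert v T) c := by
  simp only [Matrix.mul_apply, koszulMatrix, Matrix.of_apply, Finset.sum_mul]
  rw [Finset.sum_comm]
  exact Finset.sum_congr rfl fun v _ => by simp

theorem koszulMatrix_mul_self : s.koszulMatrix * s.koszulMatrix = 0 := by
  ext1 T S
  rw [koszulMatrix_mul_apply]
  simp only [koszulMatrix, Matrix.of_apply, Finset.mul_sum, Matrix.zero_apply]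
  rw [Finset.sum_sigma']
  refine Finset.sum_involution (fun p _ => ⟨p.2, p.1⟩) ?_ ?_ ?_ (fun _ _ => rfl)
  · rintro ⟨u, v⟩ h
    simp only [Finset.mem_sigma, Finset.mem_compl, Finset.mem_insert, not_or] at h
    simp only [Finset.insert_comm u v T]
    split_ifs
    · have hsign := congrArg (C (σ := σ)) (s.anticomm h.1 h.2.2 (Ne.symm h.2.1))
      simp only [map_mul, map_neg] at hsign
      linear_combination X u * X v * hsign
    · simp
  · rintro ⟨u, v⟩ h - heq
    simp only [Finset.mem_sigma, Finset.mem_compl, Finset.mem_insert, not_or] at h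
    exact h.2.1 (congrArg Sigma.fst heq)
  · rintro ⟨u, v⟩ h
    simp only [Finset.mem_sigma, Finset.mem_compl, Finset.mem_insert, not_or] at h ⊢
    exact ⟨h.2.2, Ne.symm h.2.1, h.1⟩

theorem koszulMatrix_mul_homotopy_apply_of_notMem {v : σ} {T : Finset σ} (hv : v ∉ T)
    (w : Matrix (Finset σ) κ (MvPolynomial σ R)) (c : κ) :
    (s.koszulMatrix * s.homotopy v w) T c = X v * divX v (w T c) := by
  rw [koszulMatrix_mul_apply, Finset.sum_eq_single v]
  · rw [homotopy_insert_apply s hv]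
    have hsign := congrArg (C (σ := σ)) (s.sign_mul_self v T)
    rw [map_mul, map_one] at hsign
    linear_combination X v * divX v (w T c) * hsign
  · intro u _ huv
    simp [homotopy, huv.symm, hv]
  · simp [hv]

theorem koszulMatrix_mul_homotopy_add_homotopy_koszulMatrix_mul {v : σ} {T : Finset σ} (hv : v ∉ T)
    (w : Matrix (Finset σ) κ (MvPolynomial σ R)) (c : κ) :
    (s.koszulMatrix * s.homotopy v w) (insert v T) c +
      s.homotopy v (s.koszulMatrix * w) (insert v T) c = w (insert v T) c := by
  have hcompl : Tᶜ = insert v (insert v T)ᶜ := by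
    ext t
    by_cases ht : t = v <;> simp_all
  have hterm : ∀ u ∈ (insert v T)ᶜ,
      C (s.sign u (insert v T)) * X u * s.homotopy v w (insert u (insert v T)) c =
        -(C (s.sign v T) * divX v (C (s.sign u T) * X u * w (insert u T) c)) := by
    intro u hu
    simp only [Finset.mem_compl, Finset.mem_insert, not_or] at hu
    rw [Finset.insert_comm, homotopy_insert_apply s (by grind), mul_assoc (C (s.sign u T)),
      divX_C_mul, divX_X_mul_of_ne hu.1]
    have hsign := congrArg (C (σ := σ)) (s.sign_insert_mul_sign_insert hu.2 hv hu.1)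
    simp only [map_mul, map_neg] at hsign
    linear_combination X u * divX v (w (insert u T) c) * hsign
  have hsign := congrArg (C (σ := σ)) (s.sign_mul_self v T)
  rw [map_mul, map_one] at hsign
  rw [homotopy_insert_apply s hv, koszulMatrix_mul_apply, koszulMatrix_mul_apply,
    Finset.sum_congr rfl hterm, hcompl, Finset.sum_insert (by simp), map_add, map_sum,
    mul_assoc (C (s.sign v T)), divX_C_mul, divX_X_mul_self, Finset.sum_neg_distrib,
    ← Finset.mul_sum]
  linear_combination w (insert v T) c * hsign

theorem coeff_sub_koszulMatrix_mul_homotopy {w : Matrix (Finset σ) κ (MvPolynomial σ R)}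
    (hw : s.koszulMatrix * w = 0) (v : σ) (T : Finset σ) (c : κ) (m : σ →₀ ℕ) :
    coeff m ((w - s.koszulMatrix * s.homotopy v w) T c) =
      if v ∉ T ∧ v ∉ m.support then coeff m (w T c) else 0 := by
  rw [Matrix.sub_apply, coeff_sub]
  by_cases hv : v ∈ T
  · have hhomotopy := s.koszulMatrix_mul_homotopy_add_homotopy_koszulMatrix_mul
      (Finset.notMem_erase v T) w c
    rw [hw, Finset.insert_erase hv] at hhomotopy
    have hzero : s.homotopy v (0 : Matrix (Finset σ) κ (MvPolynomial σ R)) T c = 0 := by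
      simp [homotopy]
    rw [hzero, add_zero] at hhomotopy
    simp [hhomotopy, hv]
  · rw [s.koszulMatrix_mul_homotopy_apply_of_notMem hv, coeff_X_mul_divX]
    split_ifs <;> simp_all

theorem exists_coeff_sub_koszulMatrix_mul {w : Matrix (Finset σ) κ (MvPolynomial σ R)}
    (hw : s.koszulMatrix * w = 0) (S : Finset σ) :
    ∃ u : Matrix (Finset σ) κ (MvPolynomial σ R), ∀ T c m,
      coeff m ((w - s.koszulMatrix * u) T c) =
        if Disjoint T S ∧ Disjoint m.support S then coeff m (w T c) else 0 := by
  induction S using Finset.induction_on with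
  | empty => exact ⟨0, by simp⟩
  | insert v S _ ih =>
    obtain ⟨u, hu⟩ := ih
    have hcycle : s.koszulMatrix * (w - s.koszulMatrix * u) = 0 := by
      rw [Matrix.mul_sub, hw, ← Matrix.mul_assoc, koszulMatrix_mul_self, Matrix.zero_mul, sub_zero]
    refine ⟨u + s.homotopy v (w - s.koszulMatrix * u), fun T c m => ?_⟩
    rw [Matrix.mul_add, ← sub_sub, s.coeff_sub_koszulMatrix_mul_homotopy hcycle, hu,
      ← ite_and]
    refine if_congr ?_ rfl rfl
    rw [Finset.disjoint_insert_right, Finset.disjoint_insert_right]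
    tauto

theorem exists_koszulMatrix_mul_eq {w : Matrix (Finset σ) κ (MvPolynomial σ R)}
    (hw : s.koszulMatrix * w = 0) (hconst : ∀ c, coeff 0 (w ∅ c) = 0) :
    ∃ u : Matrix (Finset σ) κ (MvPolynomial σ R), s.koszulMatrix * u = w := by
  obtain ⟨u, hu⟩ := s.exists_coeff_sub_koszulMatrix_mul hw Finset.univ
  refine ⟨u, (sub_eq_zero.1 ?_).symm⟩
  ext T c m
  rw [hu]
  simp only [← Finset.top_eq_univ, disjoint_top, Finset.bot_eq_empty, Finsupp.support_eq_empty,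
    Matrix.zero_apply, coeff_zero, ite_eq_right_iff, and_imp]
  rintro rfl rfl
  exact hconst c

end KoszulSign

end Koszul

namespace LinearResolution

variable {σ R : Type*} [Fintype σ] [DecidableEq σ] [CommRing R] {e : ℕ}
  {I : Ideal (MvPolynomial σ R)}

theorem exists_mul_d_eq_koszulMatrix_mul (A : LinearResolution e I) (s : KoszulSign σ R)
    {n q : ℕ} {w : Matrix (Finset σ) (A.ι q) (MvPolynomial σ R)} (he : 0 < e)
    (hcard : ∀ T c, n + 1 ≤ T.card → w T c = 0)
    (hdegree : ∀ T c, ∀ j < stepDegree e q, homogeneousComponent j (w T c) = 0)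
    (hlift : ∃ W : Matrix (Finset σ) (A.ι (q + 1)) (MvPolynomial σ R),
      W * A.d q = s.koszulMatrix * w) :
    ∃ W : Matrix (Finset σ) (A.ι (q + 1)) (MvPolynomial σ R),
      (∀ T c, n ≤ T.card → W T c = 0) ∧ (∀ T c, homogeneousComponent 0 (W T c) = 0) ∧
        W * A.d q = s.koszulMatrix * w := by
  have hcomponent : (s.koszulMatrix * w).map (homogeneousComponent (stepDegree e q)) = 0 := by
    obtain ⟨j, hj⟩ := Nat.exists_eq_add_one.2 (stepDegree_pos he q)
    have hwj : w.map (homogeneousComponent j) = 0 := by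
      ext1 T c
      exact hdegree T c j (by omega)
    rw [hj, s.isHomogeneousMatrix_koszulMatrix.map_homogeneousComponent_mul_left, hwj,
      Matrix.mul_zero]
  obtain ⟨W, hW, hWd⟩ :=
    (A.isHomogeneous q).exists_homogeneousComponent_zero_eq_zero_mul_eq hcomponent hlift
  refine ⟨Matrix.of fun T c => if n ≤ T.card then 0 else W T c, fun T c hT => if_pos hT,
    fun T c => ?_, ?_⟩
  · rw [Matrix.of_apply]
    split_ifs
    exacts [map_zero _, hW T c]
  · rw [← hWd]
    ext1 T c
    by_cases hT : n ≤ T.card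
    · rw [hWd, s.koszulMatrix_mul_apply, Matrix.mul_apply, Finset.sum_eq_zero (by simp [hT])]
      refine (Finset.sum_eq_zero fun v hv => ?_).symm
      rw [hcard _ _ (by rw [Finset.card_insert_of_notMem (Finset.mem_compl.1 hv)]; omega), mul_zero]
    · simp [Matrix.mul_apply, hT]

/- Diagram chase in the tensor product of the Koszul complex with the resolution: each step up the
resolution costs one Koszul degree and, by linearity, produces entries without constant term. -/
theorem exists_eq_koszulMatrix_mul_add_mul_d (A : LinearResolution e I) (s : KoszulSign σ R)
    (he : 0 < e) (n : ℕ) {q : ℕ} {w : Matrix (Finset σ) (A.ι q) (MvPolynomial σ R)}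
    (hcard : ∀ T c, n ≤ T.card → w T c = 0)
    (hdegree : ∀ T c, ∀ j < stepDegree e q, homogeneousComponent j (w T c) = 0)
    (hlift : ∃ W : Matrix (Finset σ) (A.ι (q + 1)) (MvPolynomial σ R),
      W * A.d q = s.koszulMatrix * w) :
    ∃ (u : Matrix (Finset σ) (A.ι q) (MvPolynomial σ R))
      (u' : Matrix (Finset σ) (A.ι (q + 1)) (MvPolynomial σ R)),
      w = s.koszulMatrix * u + u' * A.d q := by
  induction n generalizing q with
  | zero => exact ⟨0, 0, by ext1 T c; simp [hcard T c]⟩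
  | succ n ih =>
    obtain ⟨W, hWcard, hW, hWd⟩ := A.exists_mul_d_eq_koszulMatrix_mul s he hcard hdegree hlift
    have hKW : (s.koszulMatrix * W) * A.d q = 0 := by
      rw [Matrix.mul_assoc, hWd, ← Matrix.mul_assoc, s.koszulMatrix_mul_self, Matrix.zero_mul]
    obtain ⟨v, v', rfl⟩ := ih hWcard (fun T c j hj => Nat.lt_one_iff.1 hj ▸ hW T c)
      (A.exists_mul_d_succ_eq hKW)
    have hcycle : s.koszulMatrix * (w - v * A.d q) = 0 := by
      rw [Matrix.mul_sub, ← hWd, Matrix.add_mul, Matrix.mul_assoc v', A.d_succ_mul_d,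
        Matrix.mul_zero, add_zero, Matrix.mul_assoc, sub_self]
    obtain ⟨u, hu⟩ := s.exists_koszulMatrix_mul_eq hcycle fun c => by
      have hw : coeff 0 (w ∅ c) = 0 := by
        simpa [homogeneousComponent_zero] using hdegree ∅ c 0 (stepDegree_pos he q)
      rw [Matrix.sub_apply, coeff_sub, hw,
        (A.isHomogeneous q).coeff_zero_mul (stepDegree_pos he q).ne', sub_zero]
    exact ⟨u, v, by rw [hu, sub_add_cancel]⟩

theorem exists_sub_koszulMatrix_mul_mem (A : LinearResolution e I) (s : KoszulSign σ R)
    (he : 0 < e) {z : Matrix (Finset σ) Unit (MvPolynomial σ R)}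
    (hdegree : ∀ T, ∀ j < e, homogeneousComponent j (z T ()) = 0)
    (hcycle : ∀ T, (s.koszulMatrix * z) T () ∈ I) :
    ∃ y : Matrix (Finset σ) Unit (MvPolynomial σ R),
      ∀ T, z T () - (s.koszulMatrix * y) T () ∈ I := by
  let w : Matrix (Finset σ) (A.ι 0) (MvPolynomial σ R) := Matrix.of fun T _ => z T ()
  obtain ⟨u, u', hw⟩ := A.exists_eq_koszulMatrix_mul_add_mul_d s he (Fintype.card σ + 1) (q := 0)
    (w := w) (fun T _ hT => absurd hT (by have := Finset.card_le_univ T; omega))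
    (fun T _ j hj => hdegree T j hj) (A.exists_mul_d_zero_eq hcycle)
  refine ⟨Matrix.of fun T _ => u T default, fun T => ?_⟩
  have hz : z T () = (s.koszulMatrix * u) T default + (u' * A.d 0) T default :=
    congrFun (congrFun hw T) default
  have hu : (s.koszulMatrix * Matrix.of fun T (_ : Unit) => u T default) T () =
      (s.koszulMatrix * u) T default := rfl
  rw [hz, hu, add_sub_cancel_left]
  exact A.mul_d_zero_apply_mem u' T default

end LinearResolution

namespace KoszulSign

variable {σ R κ : Type*} [DecidableEq σ] [CommRing R] {W T : Finset σ} {a b p q : σ}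

/-- The Koszul chain `X a * X b • e_{W \ {a, b}}`. -/
noncomputable def edgeChain (R : Type*) [CommRing R] (W : Finset σ) (a b : σ) :
    Matrix (Finset σ) Unit (MvPolynomial σ R) :=
  Matrix.of fun T _ => if T = W \ {a, b} then X a * X b else 0

theorem coeff_edgeChain_eq_zero_iff [Nontrivial R] (hp : p ∈ W) (hq : q ∈ W) (hpq : p ≠ q) :
    coeff (Finsupp.single p 1 + Finsupp.single q 1) (edgeChain R W a b (W \ {p, q}) ()) = 0 ↔
      s(p, q) ≠ s(a, b) := by
  rw [edgeChain, Matrix.of_apply, ne_eq, Sym2.eq_iff]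
  by_cases hpair : p = a ∧ q = b ∨ p = b ∧ q = a
  · have hcoeff_one : coeff (Finsupp.single p 1 + Finsupp.single q 1)
        (X a * X b : MvPolynomial σ R) = 1 := by
      rcases hpair with ⟨rfl, rfl⟩ | ⟨rfl, rfl⟩ <;> simp [X, monomial_mul, add_comm]
    rw [if_pos (by grind), hcoeff_one]
    simp [hpair]
  · have hsdiff : W \ {p, q} ≠ W \ {a, b} := fun h => by
      have hp' : p ∉ W \ {a, b} := h ▸ by simp
      have hq' : q ∉ W \ {a, b} := h ▸ by simp
      grind
    simp [hsdiff, hpair]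

variable [Fintype σ] (s : KoszulSign σ R)

theorem coeff_koszulMatrix_mul_apply (y : Matrix (Finset σ) κ (MvPolynomial σ R)) (c : κ)
    (hp : p ∉ T) (hq : q ∉ T) (hpq : p ≠ q) :
    coeff (Finsupp.single p 1 + Finsupp.single q 1) ((s.koszulMatrix * y) T c) =
      s.sign p T * coeff (Finsupp.single q 1) (y (insert p T) c) +
        s.sign q T * coeff (Finsupp.single p 1) (y (insert q T) c) := by
  have hsupport (v : σ) : v ∈ (Finsupp.single p 1 + Finsupp.single q 1).support ↔
      v ∈ ({p, q} : Finset σ) := by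
    simp only [Finsupp.mem_support_iff, Finsupp.add_apply, Finsupp.single_apply]
    grind
  have hsubset : {p, q} ⊆ Tᶜ := by simp [Finset.insert_subset_iff, hp, hq]
  simp only [koszulMatrix_mul_apply, coeff_sum, mul_assoc, coeff_C_mul, coeff_X_mul', hsupport]
  rw [← Finset.sum_subset hsubset fun v _ hv => by rw [if_neg hv, mul_zero], Finset.sum_pair hpq,
    if_pos (by simp), if_pos (by simp), add_tsub_cancel_left, add_tsub_cancel_right]

/-- The signed linear coefficients of the entries of a Koszul chain `y` at the sets `W.erase p`.
Its coboundary along `p`–`q` is, up to sign, the coefficient of `X p * X q` in the boundary of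
`y` at `W \ {p, q}`. -/
noncomputable def potential (W : Finset σ) (y : Finset σ → MvPolynomial σ R) (p : σ) : R :=
  s.sign p (W.erase p) * coeff (Finsupp.single p 1) (y (W.erase p))

theorem potential_eq_potential_iff (y : Matrix (Finset σ) κ (MvPolynomial σ R)) (c : κ)
    (hp : p ∈ W) (hq : q ∈ W) (hpq : p ≠ q) :
    s.potential W (y · c) p = s.potential W (y · c) q ↔
      coeff (Finsupp.single p 1 + Finsupp.single q 1)
        ((s.koszulMatrix * y) (W \ {p, q}) c) = 0 := by
  obtain ⟨T, hpT, hqT, rfl⟩ : ∃ T, p ∉ T ∧ q ∉ T ∧ W = insert p (insert q T) :=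
    ⟨W \ {p, q}, by simp, by simp, by grind⟩
  have hsdiff : insert p (insert q T) \ {p, q} = T := by grind
  have herase_q : (insert p (insert q T)).erase q = insert p T := by grind
  rw [hsdiff, s.coeff_koszulMatrix_mul_apply y c hpT hqT hpq, potential, potential, herase_q,
    Finset.erase_insert (by grind), ← sub_eq_zero]
  have hsign : (s.sign p (insert q T) * s.sign q T) * (s.sign p (insert q T) * s.sign q T) = 1 := by
    linear_combination s.sign q T * s.sign q T * s.sign_mul_self p (insert q T) +
      s.sign_mul_self q T
  refine Iff.trans (Eq.congr_left ?_) (IsUnit.of_mul_eq_one _ hsign).mul_right_eq_zero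
  linear_combination
    - (s.sign p (insert q T) * coeff (Finsupp.single p 1) (y (insert q T) c)) * s.sign_mul_self q T
    - (s.sign p T * coeff (Finsupp.single q 1) (y (insert p T) c)) * s.anticomm hpT hqT hpq
    + (s.sign q (insert p T) * coeff (Finsupp.single q 1) (y (insert p T) c)) * s.sign_mul_self p T

theorem koszulMatrix_mul_edgeChain_apply_mem {I : Ideal (MvPolynomial σ R)}
    (hI : ∀ v ∈ W \ {a, b}, X v * (X a * X b) ∈ I) (T : Finset σ) :
    (s.koszulMatrix * edgeChain R W a b) T () ∈ I := by
  rw [koszulMatrix_mul_apply]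
  refine sum_mem fun v _ => ?_
  rw [edgeChain, Matrix.of_apply, mul_assoc]
  split_ifs with hT
  · exact I.mul_mem_left _ (hI v (hT ▸ Finset.mem_insert_self v T))
  · simp

end KoszulSign

namespace LinearResolution

variable {σ R : Type*} [CommRing R] {e : ℕ} {I : Ideal (MvPolynomial σ R)}

theorem exists_degree_eq_le_of_mem_support (A : LinearResolution e I) {r : MvPolynomial σ R}
    (hr : r ∈ I) {m : σ →₀ ℕ} (hm : m ∈ r.support) :
    ∃ g ∈ I, ∃ n ∈ g.support, n.degree = e ∧ n ≤ m := by
  classical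
  obtain ⟨U, hU⟩ := A.exists_mul_d_zero_eq (W := Matrix.of fun (_ : Unit) _ => r) fun _ => hr
  have hr_eq : r = ∑ b, U () b * A.d 0 b default := (congrFun (congrFun hU ()) default).symm
  rw [hr_eq, mem_support_iff, coeff_sum] at hm
  obtain ⟨b, -, hb⟩ := Finset.exists_ne_zero_of_sum_ne_zero hm
  rw [coeff_mul] at hb
  obtain ⟨⟨l, n⟩, hln, hcoeff⟩ := Finset.exists_ne_zero_of_sum_ne_zero hb
  have hn := right_ne_zero_of_mul hcoeff
  refine ⟨_, A.d_zero_apply_mem b default, n, mem_support_iff.2 hn, ?_, ?_⟩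
  · by_contra hdegree
    exact hn ((A.isHomogeneous 0 b default).coeff_eq_zero hdegree)
  · rw [← Finset.HasAntidiagonal.mem_antidiagonal.1 hln]
    exact le_add_self

theorem exists_forall_eq_iff_sym2_ne [Finite σ] [DecidableEq σ] [Nontrivial R]
    (A : LinearResolution 2 I) {W : Finset σ} {a b : σ}
    (hI : ∀ v ∈ W \ {a, b}, X v * (X a * X b) ∈ I) :
    ∃ f : σ → R, ∀ p ∈ W, ∀ q ∈ W, p ≠ q →
      (∀ r ∈ I, coeff (Finsupp.single p 1 + Finsupp.single q 1) r = 0) →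
        (f p = f q ↔ s(p, q) ≠ s(a, b)) := by
  cases nonempty_fintype σ
  obtain ⟨s⟩ := nonempty_koszulSign (σ := σ) (R := R)
  have hhomogeneous (T : Finset σ) : (KoszulSign.edgeChain R W a b T ()).IsHomogeneous 2 := by
    rw [KoszulSign.edgeChain, Matrix.of_apply]
    split_ifs
    exacts [(isHomogeneous_X R a).mul (isHomogeneous_X R b), isHomogeneous_zero _ _ _]
  obtain ⟨y, hy⟩ := A.exists_sub_koszulMatrix_mul_mem s two_pos
    (fun T j hj => by rw [homogeneousComponent_of_mem (hhomogeneous T), if_neg hj.ne])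
    (s.koszulMatrix_mul_edgeChain_apply_mem hI)
  refine ⟨s.potential W (y · ()), fun p hp q hq hpq hcoeff => ?_⟩
  have hsub := hcoeff _ (hy (W \ {p, q}))
  rw [coeff_sub, sub_eq_zero] at hsub
  rw [s.potential_eq_potential_iff y () hp hq hpq, ← hsub,
    KoszulSign.coeff_edgeChain_eq_zero_iff hp hq hpq]

end LinearResolution

section OneSkeleton

variable {K : Type*} [Field K] {Δ : Set (Finset V)}

/-- The graph of the edges of a simplicial complex. -/
def oneSkeleton (Δ : Set (Finset V)) : SimpleGraph V where
  Adj u w := u ≠ w ∧ {u, w} ∈ Δ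
  symm := ⟨fun u w ⟨hne, huw⟩ => ⟨hne.symm, Finset.pair_comm u w ▸ huw⟩⟩

/-- A flag complex: every clique of the one-skeleton is a face. -/
def IsFlag (Δ : Set (Finset V)) : Prop :=
  ∀ S : Finset V, (oneSkeleton Δ).IsClique ↑S → S ∈ Δ

/-- Every edge of the graph becomes a bridge once the common neighbours of its ends are deleted:
`Q` is the side of `a` when the edge `a`–`b` is cut. (This is a form of chordality.) -/
def IsLocallyBridged {σ : Type*} (G : SimpleGraph σ) : Prop :=
  ∀ a b, G.Adj a b → ∃ Q : Set σ, a ∈ Q ∧ b ∉ Q ∧ ∀ u ∈ Q, ∀ w ∉ Q, G.Adj u w →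
    u ∉ G.commonNeighbors a b → w ∉ G.commonNeighbors a b → u = a ∧ w = b

theorem isFlag_of_linearResolution (hΔ : IsSimplicialComplex Δ)
    (A : LinearResolution 2 (srIdeal K Δ)) : IsFlag Δ := by
  have hlower : IsLowerSet Δ := fun F G hGF hF => hΔ.2 F hF G hGF
  intro S hclique
  by_contra hS
  have hmem : ∏ v ∈ S, (X v : MvPolynomial V K) ∈ srIdeal K Δ := Ideal.subset_span ⟨S, hS, rfl⟩
  obtain ⟨g, hg, n, hn, hdegree, hnS⟩ := A.exists_degree_eq_le_of_mem_support hmem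
    (m := ∑ v ∈ S, Finsupp.single v 1) (by simp [X, ← monomial_sum_one])
  refine (mem_srIdeal_iff hlower).1 hg n hn ?_
  have hclique_support : (oneSkeleton Δ).IsClique (n.support : Set V) :=
    hclique.subset <| Finset.coe_subset.2 fun v hv => by
      by_contra hvS
      exact Finsupp.mem_support_iff.1 hv <| by
        simpa [Finsupp.finsetSum_apply, Finsupp.single_apply, hvS] using hnS v
  have hcard : n.support.card ≤ 2 := by
    rw [← hdegree, Finsupp.degree_apply, Finset.card_eq_sum_ones]
    exact Finset.sum_le_sum fun v hv => Nat.one_le_iff_ne_zero.2 (Finsupp.mem_support_iff.1 hv)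
  have hne : n.support.card ≠ 0 := by
    rintro h
    simp [Finsupp.card_support_eq_zero.1 h] at hdegree
  obtain hone | htwo : n.support.card = 1 ∨ n.support.card = 2 := by omega
  · obtain ⟨v, hv⟩ := Finset.card_eq_one.1 hone
    exact hv ▸ hΔ.1 v
  · obtain ⟨p, q, hpq, hsupport⟩ := Finset.card_eq_two.1 htwo
    rw [hsupport] at hclique_support ⊢
    exact (hclique_support (by simp) (by simp) hpq).2

theorem coeff_eq_zero_of_mem_srIdeal (hΔ : IsLowerSet Δ) {p q : V} (hpq : {p, q} ∈ Δ)
    {r : MvPolynomial V K} (hr : r ∈ srIdeal K Δ) :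
    coeff (Finsupp.single p 1 + Finsupp.single q 1) r = 0 := by
  by_contra hcoeff
  refine (mem_srIdeal_iff hΔ).1 hr _ (mem_support_iff.2 hcoeff) (hΔ ?_ hpq)
  grind [Finsupp.add_apply]

theorem X_mul_X_mul_X_mem_srIdeal (hΔ : IsLowerSet Δ) {a b v : V} (hab : a ≠ b) (hva : v ≠ a)
    (hvb : v ≠ b) (hv : v ∉ (oneSkeleton Δ).commonNeighbors a b) :
    (X v * (X a * X b) : MvPolynomial V K) ∈ srIdeal K Δ := by
  refine Ideal.subset_span ⟨{v, a, b}, fun hface => hv ⟨⟨hva.symm, ?_⟩, hvb.symm, ?_⟩, ?_⟩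
  · exact hΔ (show ({a, v} : Finset V) ⊆ {v, a, b} by grind) hface
  · exact hΔ (show ({b, v} : Finset V) ⊆ {v, a, b} by grind) hface
  · simp [hva, hvb, hab]

theorem isLocallyBridged_oneSkeleton [Finite V] (hΔ : IsLowerSet Δ)
    (A : LinearResolution 2 (srIdeal K Δ)) : IsLocallyBridged (oneSkeleton Δ) := by
  classical
  cases nonempty_fintype V
  intro a b hab
  let W : Finset V := {c | c ∉ (oneSkeleton Δ).commonNeighbors a b}
  have hW {c : V} : c ∈ W ↔ c ∉ (oneSkeleton Δ).commonNeighbors a b := by simp [W]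
  have ha : a ∈ W := hW.2 fun h => h.1.1 rfl
  have hb : b ∈ W := hW.2 fun h => h.2.1 rfl
  have hI : ∀ v ∈ W \ {a, b}, (X v * (X a * X b) : MvPolynomial V K) ∈ srIdeal K Δ := by
    intro v hv
    simp only [Finset.mem_sdiff, Finset.mem_insert, Finset.mem_singleton, not_or] at hv
    exact X_mul_X_mul_X_mem_srIdeal hΔ hab.1 hv.2.1 hv.2.2 (hW.1 hv.1)
  obtain ⟨f, hf⟩ := A.exists_forall_eq_iff_sym2_ne hI
  have hf_adj {p q : V} (hp : p ∈ W) (hq : q ∈ W) (hpq : (oneSkeleton Δ).Adj p q) :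
      f p = f q ↔ s(p, q) ≠ s(a, b) :=
    hf p hp q hq hpq.1 fun r hr => coeff_eq_zero_of_mem_srIdeal hΔ hpq.2 hr
  have hfab : f a ≠ f b := fun h => (hf_adj ha hb hab).1 h rfl
  refine ⟨{u | f u = f a}, rfl, hfab.symm, fun u hu w hw huw huW hwW => ?_⟩
  have hne : f u ≠ f w := fun h => hw (h.symm.trans hu)
  rw [Ne, hf_adj (hW.2 huW) (hW.2 hwW) huw, not_not, Sym2.eq_iff] at hne
  rcases hne with h | ⟨rfl, rfl⟩
  · exact h
  · exact absurd hu.symm hfab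

end OneSkeleton

section SimplicialVertex

variable {σ : Type*} {G : SimpleGraph σ} {U C : Finset σ} {v s t : σ}

/-- `C` is a part of `U` all of whose exits (inside `U`) are neighbours of `v`, while `v` is
neither in `C` nor adjacent to `C`: a union of components of `U` minus the closed neighbourhood
of `v`. -/
structure IsCutOff (G : SimpleGraph σ) (U : Finset σ) (v : σ) (C : Finset σ) : Prop where
  subset : C ⊆ U
  notMem : v ∉ C
  not_adj : ∀ c ∈ C, ¬ G.Adj v c
  mem_or_adj : ∀ c ∈ C, ∀ d ∈ U, G.Adj c d → d ∈ C ∨ G.Adj v d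

/-- A nonempty part of `U` cut off by some vertex, minimal under inclusion. -/
def IsMinimalCutOff (G : SimpleGraph σ) (U C : Finset σ) : Prop :=
  Minimal (fun C => C.Nonempty ∧ ∃ v, IsCutOff G U v C) C

theorem exists_isMinimalCutOff (hU : ¬ G.IsClique (U : Set σ)) : ∃ C, IsMinimalCutOff G U C := by
  classical
  simp only [SimpleGraph.isClique_iff, Set.Pairwise, Finset.mem_coe, not_forall] at hU
  obtain ⟨v, -, w, hw, hvw, hnadj⟩ := hU
  have hcutOff : IsCutOff G U v {d ∈ U | d ≠ v ∧ ¬ G.Adj v d} := by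
    refine ⟨Finset.filter_subset _ _, by simp, by simp, fun c hc d hd hcd => ?_⟩
    simp only [Finset.mem_filter] at hc ⊢
    have hdv : d ≠ v := by
      rintro rfl
      exact hc.2.2 hcd.symm
    tauto
  exact exists_minimal_of_wellFoundedLT _
    ⟨_, ⟨w, Finset.mem_filter.2 ⟨hw, hvw.symm, hnadj⟩⟩, v, hcutOff⟩

namespace IsMinimalCutOff

theorem subset_of_isCutOff (hC : IsMinimalCutOff G U C) {D : Finset σ} (hDC : D ⊆ C)
    (hD : D.Nonempty) (hcutOff : IsCutOff G U v D) : C ⊆ D :=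
  hC.2 ⟨hD, v, hcutOff⟩ hDC

/- The bridge `v`–`s` cannot separate `s` from `t`: by minimality its side containing `t` and `v`
contains all of `C`, hence a neighbour of `s` other than `v`. -/
theorem adj_of_adj_of_adj (hC : IsMinimalCutOff G U C) (hG : IsLocallyBridged G)
    (hcutOff : IsCutOff G U v C) (hvs : G.Adj v s) (hvt : G.Adj v t) (hst : s ≠ t)
    (hsC : ∃ c ∈ C, G.Adj s c) (htC : ∃ c ∈ C, G.Adj t c) : G.Adj s t := by
  classical
  by_contra hnadj
  obtain ⟨Q, hvQ, hsQ, hQ⟩ := hG v s hvs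
  obtain ⟨c, hc, hsc⟩ := hsC
  obtain ⟨c', hc', htc'⟩ := htC
  have hC_common {d : σ} (hd : d ∈ C) : d ∉ G.commonNeighbors v s :=
    fun h => hcutOff.not_adj d hd h.1
  have ht_common : t ∉ G.commonNeighbors v s := fun h => hnadj h.2
  have hv_common : v ∉ G.commonNeighbors v s := fun h => h.1.ne rfl
  have hs_common : s ∉ G.commonNeighbors v s := fun h => h.2.ne rfl
  have htQ : t ∈ Q := by
    by_contra htQ
    exact hst (hQ v hvQ t htQ hvt hv_common ht_common).2.symm
  have hc'Q : c' ∈ Q := by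
    by_contra hc'Q
    exact hvt.ne (hQ t htQ c' hc'Q htc' ht_common (hC_common hc')).1.symm
  have hside : IsCutOff G U v {d ∈ C | d ∈ Q} := by
    refine ⟨(Finset.filter_subset _ _).trans hcutOff.subset, by simp [hcutOff.notMem],
      fun d hd => hcutOff.not_adj d (Finset.mem_filter.1 hd).1, fun d hd w hw hdw => ?_⟩
    obtain ⟨hdC, hdQ⟩ := Finset.mem_filter.1 hd
    refine (hcutOff.mem_or_adj d hdC w hw hdw).imp_left fun hwC => Finset.mem_filter.2 ⟨hwC, ?_⟩
    by_contra hwQ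
    exact hcutOff.notMem ((hQ d hdQ w hwQ hdw (hC_common hdC) (hC_common hwC)).1 ▸ hdC)
  have hcQ : c ∈ Q := (Finset.mem_filter.1 (hC.subset_of_isCutOff (Finset.filter_subset _ _)
    ⟨c', Finset.mem_filter.2 ⟨hc', hc'Q⟩⟩ hside hc)).2
  exact hcutOff.notMem ((hQ c hcQ s hsQ hsc.symm (hC_common hc) hs_common).1 ▸ hc)

theorem adj_of_adj_of_mem (hC : IsMinimalCutOff G U C) (hG : IsLocallyBridged G)
    (hcutOff : IsCutOff G U v C) (hvs : G.Adj v s) (hsC : ∃ c ∈ C, G.Adj s c) {c : σ}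
    (hc : c ∈ C) : G.Adj s c := by
  classical
  by_contra hnadj
  have hfar : IsCutOff G U s {d ∈ C | ¬ G.Adj s d} := by
    refine ⟨(Finset.filter_subset _ _).trans hcutOff.subset,
      fun h => hcutOff.not_adj s (Finset.mem_filter.1 h).1 hvs, by simp, fun d hd w hw hdw => ?_⟩
    obtain ⟨hdC, hsd⟩ := Finset.mem_filter.1 hd
    by_cases hsw : G.Adj s w
    · exact Or.inr hsw
    · refine Or.inl (Finset.mem_filter.2 ⟨?_, hsw⟩)
      refine (hcutOff.mem_or_adj d hdC w hw hdw).resolve_right fun hvw => hsw ?_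
      exact hC.adj_of_adj_of_adj hG hcutOff hvs hvw (by rintro rfl; exact hsd hdw.symm) hsC
        ⟨d, hdC, hdw.symm⟩
  obtain ⟨d, hd, hsd⟩ := hsC
  exact (Finset.mem_filter.1 (hC.subset_of_isCutOff (Finset.filter_subset _ _)
    ⟨c, Finset.mem_filter.2 ⟨hc, hnadj⟩⟩ hfar hd)).2 hsd

theorem isClique (hC : IsMinimalCutOff G U C) (hG : IsLocallyBridged G) :
    G.IsClique (C : Set σ) := by
  classical
  obtain ⟨⟨-, v, hcutOff⟩, -⟩ := id hC
  intro c hc d hd hcd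
  by_contra hnadj
  have hfar : IsCutOff G U c {w ∈ C | w ≠ c ∧ ¬ G.Adj c w} := by
    refine ⟨(Finset.filter_subset _ _).trans hcutOff.subset, by simp, by simp,
      fun w hw x hx hwx => ?_⟩
    simp only [Finset.mem_filter] at hw ⊢
    by_cases hcx : G.Adj c x
    · exact Or.inr hcx
    · have hxc : x ≠ c := by
        rintro rfl
        exact hw.2.2 hwx.symm
      refine Or.inl ⟨?_, hxc, hcx⟩
      refine (hcutOff.mem_or_adj w hw.1 x hx hwx).resolve_right fun hvx => hcx ?_
      exact (hC.adj_of_adj_of_mem hG hcutOff hvx ⟨w, hw.1, hwx.symm⟩ hc).symm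
  exact (Finset.mem_filter.1 (hC.subset_of_isCutOff (Finset.filter_subset _ _)
    ⟨d, Finset.mem_filter.2 ⟨hd, hcd.symm, hnadj⟩⟩ hfar hc)).2.1 rfl

theorem isClique_neighborSet_inter (hC : IsMinimalCutOff G U C) (hG : IsLocallyBridged G) {c : σ}
    (hc : c ∈ C) : G.IsClique (G.neighborSet c ∩ U) := by
  obtain ⟨⟨-, v, hcutOff⟩, -⟩ := id hC
  rintro s ⟨hcs, hs⟩ t ⟨hct, ht⟩ hst
  rw [SimpleGraph.mem_neighborSet] at hcs hct
  rcases hcutOff.mem_or_adj c hc s hs hcs with hsC | hvs <;>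
    rcases hcutOff.mem_or_adj c hc t ht hct with htC | hvt
  · exact hC.isClique hG hsC htC hst
  · exact (hC.adj_of_adj_of_mem hG hcutOff hvt ⟨c, hc, hct.symm⟩ hsC).symm
  · exact hC.adj_of_adj_of_mem hG hcutOff hvs ⟨c, hc, hcs.symm⟩ htC
  · exact hC.adj_of_adj_of_adj hG hcutOff hvs hvt hst ⟨c, hc, hcs.symm⟩ ⟨c, hc, hct.symm⟩

end IsMinimalCutOff

theorem IsLocallyBridged.exists_isClique_neighborSet_inter (hG : IsLocallyBridged G)
    (hU : U.Nonempty) : ∃ x ∈ U, G.IsClique (G.neighborSet x ∩ U) := by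
  by_cases hclique : G.IsClique (U : Set σ)
  · exact hU.imp fun x hx => ⟨hx, hclique.subset Set.inter_subset_right⟩
  · obtain ⟨C, hC⟩ := exists_isMinimalCutOff hclique
    obtain ⟨⟨⟨c, hc⟩, v, hcutOff⟩, -⟩ := id hC
    exact ⟨c, hcutOff.subset hc, hC.isClique_neighborSet_inter hG hc⟩

end SimplicialVertex

section PerfectElimination

variable {Δ : Set (Finset V)}

theorem setOf_mem_and_subset_eq_union_cone (hΔ : IsLowerSet Δ) {U F : Finset V} {x : V}
    (hx : x ∈ U) (hF : ∀ u, u ∈ F ↔ u ∈ U ∧ (oneSkeleton Δ).Adj x u) (hxF : insert x F ∈ Δ) :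
    {S | S ∈ Δ ∧ S ⊆ U} = {S | S ∈ Δ ∧ S ⊆ U.erase x} ∪ {S | S ⊆ insert x F} := by
  ext S
  simp only [Set.mem_ofPred_eq, Set.mem_union]
  constructor
  · rintro ⟨hS, hSU⟩
    by_cases hxS : x ∈ S
    · refine Or.inr fun u hu => ?_
      obtain rfl | hux := eq_or_ne u x
      · exact Finset.mem_insert_self _ _
      · have hxu : {x, u} ⊆ S := by simp [Finset.insert_subset_iff, hxS, hu]
        exact Finset.mem_insert_of_mem ((hF u).2 ⟨hSU hu, hux.symm, hΔ hxu hS⟩)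
    · exact Or.inl ⟨hS, Finset.subset_erase.2 ⟨hSU, hxS⟩⟩
  · rintro (⟨hS, hSU⟩ | hSF)
    · exact ⟨hS, hSU.trans (Finset.erase_subset x U)⟩
    · exact ⟨hΔ hSF hxF, hSF.trans (Finset.insert_subset hx fun u hu => ((hF u).1 hu).1)⟩

theorem isGeneralizedTree_setOf_mem_and_subset (hΔ : IsLowerSet Δ) (hflag : IsFlag Δ)
    (hbridged : IsLocallyBridged (oneSkeleton Δ)) (U : Finset V) :
    IsGeneralizedTree U {S | S ∈ Δ ∧ S ⊆ U} := by
  classical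
  induction U using Finset.strongInduction with | H U ih => ?_
  obtain rfl | hU := U.eq_empty_or_nonempty
  · have hempty : (∅ : Finset V) ∈ Δ := hflag ∅ (by simp)
    convert IsGeneralizedTree.simplex (∅ : Finset V) using 1
    ext S
    exact ⟨fun h => h.2, fun h => ⟨hΔ h hempty, h⟩⟩
  obtain ⟨x, hx, hclique⟩ := hbridged.exists_isClique_neighborSet_inter hU
  let F : Finset V := {u ∈ U | (oneSkeleton Δ).Adj x u}
  have hF (u : V) : u ∈ F ↔ u ∈ U ∧ (oneSkeleton Δ).Adj x u := Finset.mem_filter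
  have hxF : insert x F ∈ Δ := by
    refine hflag _ ?_
    rw [Finset.coe_insert, SimpleGraph.isClique_insert]
    exact ⟨hclique.subset fun u hu => ((hF u).1 hu).symm, fun u hu _ => ((hF u).1 hu).2⟩
  have hFU : F ⊆ U.erase x := fun u hu =>
    Finset.mem_erase.2 ⟨((hF u).1 hu).2.ne.symm, ((hF u).1 hu).1⟩
  have hcone := IsGeneralizedTree.cone _ _ F x (ih _ (Finset.erase_ssubset hx))
    ⟨hΔ (Finset.subset_insert x F) hxF, hFU⟩ (Finset.notMem_erase x U)
  rwa [Finset.insert_erase hx, ← setOf_mem_and_subset_eq_union_cone hΔ hx hF hxF] at hcone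

end PerfectElimination

/-- STATEMENT 13 (Lemma 1): for any simplicial complex `Δ` (on the vertex set `X`) which
is not a simplex, and any field `K`, the Stanley-Reisner ring `K[Δ]` has a 2-linear
resolution if and only if `Δ` is a generalized tree. -/
theorem hasTwoLinearResolution_iff_isGeneralizedTree
    {V : Type*} [Fintype V] [DecidableEq V] (K : Type*) [Field K]
    (Δ : Set (Finset V)) (hΔ : IsSimplicialComplex Δ) (hns : Δ ≠ Set.univ) :
    HasTwoLinearResolution K Δ ↔ IsGeneralizedTree Finset.univ Δ := by
  rw [hasTwoLinearResolution_iff_nonempty_linearResolution]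
  refine ⟨fun ⟨A⟩ => ?_, fun htree => htree.nonempty_linearResolution_srIdeal⟩
  have hlower : IsLowerSet Δ := fun F G hGF hF => hΔ.2 F hF G hGF
  simpa using isGeneralizedTree_setOf_mem_and_subset hlower (isFlag_of_linearResolution hΔ A)
    (isLocallyBridged_oneSkeleton hlower A) Finset.univ
end
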